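/- arXiv:1302.1715 — 4 statements merged into one kernel-verified Lean document; each statement's English description precedes it below -/
import Mathlib

section
/- Let p > 3 be a prime and let m be an integer with m(m-16)(m-256) not divisible by p. Then, as elements of Z/pZ, Σ_{k=0}^{(p-1)/2} C(2k,k)^3 / m^k ≡ (m(m-16) | p) · Σ_{k=0}^{⌊p/6⌋} C(2k,k)·C(3k,k)·C(6k,3k) · (m/(m-16)^3)^k ≡ (m(m-256) | p) · Σ_{k=0}^{⌊p/6⌋} C(2k,k)·C(3k,k)·C(6k,3k) · (m^2/(256-m)^3)^k (mod p), where divisions denote multiplication by inverses in Z/pZ. -/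
open Finset

/-! For `e = 2, q = 4, σ = 1` and for `e = 1, q = 64, σ = -1`, a Wilf–Zeilberger certificate shows
that `∑ₖ σᵏ q^(j-ek) (2s)! / (s! (s-3k)! k!³)`, with `s = j + (3-e)k`, satisfies the first-order
recurrence of `C(2j,j)³`, hence equals it. Let `n = (p-1)/2`. Since `C(2s,s) ≡ (-4)ˢ C(n,s)` modulo
`p`, the `k`-th summand becomes `C(2k,k) C(3k,k) C(6k,3k) σᵏ` times the coefficient of `xʲ` in
`x^(ek) (1-4qx)^(n-3k)`. Summing over `j` turns `∑ⱼ C(2j,j)³ xʲ` into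
`∑ₖ C(2k,k) C(3k,k) C(6k,3k) (σxᵉ)ᵏ (1-4qx)^(n-3k)`; at `x = 1/m`, Euler's criterion extracts the
Legendre symbol from the `n`-th power. -/

/-! ### Expansions of the cube of the central binomial coefficient -/

lemma cast_succ_mul_centralBinom_succ (R : Type*) [CommSemiring R] (s : ℕ) :
    ((s : R) + 1) * (s + 1).centralBinom = 2 * (2 * s + 1) * s.centralBinom :=
  mod_cast congrArg (Nat.cast : ℕ → R) (Nat.succ_mul_centralBinom_succ s)

/-- The integer `C(2s,s) · s(s-1)⋯(s-t+1)`, the hypergeometric building block of the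
Wilf–Zeilberger pairs. -/
def centralDesc (s t : ℕ) : ℕ :=
  s.centralBinom * s.descFactorial t

lemma centralDesc_eq_zero_of_lt {s t : ℕ} (h : s < t) : centralDesc s t = 0 := by
  rw [centralDesc, Nat.descFactorial_eq_zero_iff_lt.2 h, mul_zero]

lemma centralDesc_succ_succ (s t : ℕ) :
    centralDesc (s + 1) (t + 1) = 2 * (2 * s + 1) * centralDesc s t := by
  simp only [centralDesc, Nat.succ_descFactorial_succ]
  linear_combination s.descFactorial t * Nat.succ_mul_centralBinom_succ s

lemma centralDesc_zero_right (s : ℕ) : centralDesc s 0 = s.centralBinom := by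
  simp [centralDesc]

lemma cast_centralDesc_succ_right (R : Type*) [CommRing R] (s t : ℕ) :
    (centralDesc s (t + 1) : R) = (s - t) * centralDesc s t := by
  simp only [centralDesc, Nat.descFactorial_succ]
  obtain h | h := le_or_gt t s
  · push_cast [Nat.cast_sub h]
    ring
  · simp [Nat.descFactorial_eq_zero_iff_lt.2 h]

/-- The `k`-th term, over `ℚ`, of an expansion of `C(2j,j)³` into multiples of the numbers
`centralDesc (j + a * k) (3 * k)`; unlike `cubeCoeff`, it involves no truncated subtraction. -/
def wzTerm (q ρ : ℚ) (a j k : ℕ) : ℚ :=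
  q ^ j * ρ ^ k * centralDesc (j + a * k) (3 * k) / (k.factorial : ℚ) ^ 3

lemma sum_wzTerm_zero {a : ℕ} (ha : a < 3) (q ρ : ℚ) (N : ℕ) :
    ∑ k ∈ range (N + 1), wzTerm q ρ a 0 k = 1 := by
  rw [sum_range_succ', sum_eq_zero fun k _ ↦ ?_]
  · simp [wzTerm, centralDesc]
  · rw [wzTerm, centralDesc_eq_zero_of_lt (by nlinarith)]
    simp

/-- The Wilf–Zeilberger mate of `(j + 1)³ wzTerm (j + 1) - 8 (2j + 1)³ wzTerm j`; the factor `c`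
is linear in `j`, and it is found by Zeilberger's algorithm. -/
def wzMate (c q ρ : ℚ) (a j k : ℕ) : ℚ :=
  c * q ^ j * ρ ^ (k + 1) * centralDesc (j + a * (k + 1)) (3 * k + 2) / (k.factorial : ℚ) ^ 3

lemma wzTerm_four_recurrence_zero (j : ℕ) :
    ((j : ℚ) + 1) ^ 3 * wzTerm 4 (1 / 16) 1 (j + 1) 0 -
        8 * (2 * j + 1) ^ 3 * wzTerm 4 (1 / 16) 1 j 0 =
      wzMate (-64 * (3 * j + 2)) 4 (1 / 16) 1 j 0 := by
  have h2 : (centralDesc (j + 1) 2 : ℚ) = 2 * (2 * j + 1) * (j * j.centralBinom) := by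
    rw [centralDesc_succ_succ]
    push_cast [cast_centralDesc_succ_right, centralDesc_zero_right]
    ring
  simp only [wzTerm, wzMate, mul_zero, mul_one, zero_add, add_zero, pow_zero, pow_one, h2,
    centralDesc_zero_right]
  norm_num
  linear_combination 4 ^ (j + 1) * (j + 1 : ℚ) ^ 2 * cast_succ_mul_centralBinom_succ ℚ j

lemma wzTerm_four_recurrence_succ (j k : ℕ) :
    ((j : ℚ) + 1) ^ 3 * wzTerm 4 (1 / 16) 1 (j + 1) (k + 1) -
        8 * (2 * j + 1) ^ 3 * wzTerm 4 (1 / 16) 1 j (k + 1) =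
      wzMate (-64 * (3 * j + 2)) 4 (1 / 16) 1 j (k + 1) -
        wzMate (-64 * (3 * j + 2)) 4 (1 / 16) 1 j k := by
  simp only [wzTerm, wzMate]
  rw [show j + 1 + 1 * (k + 1) = j + 1 * (k + 1) + 1 by ring,
    show j + 1 * (k + 1 + 1) = j + 1 * (k + 1) + 1 by ring,
    show 3 * (k + 1) = 3 * k + 2 + 1 by ring, Nat.factorial_succ]
  simp only [centralDesc_succ_succ]
  push_cast [cast_centralDesc_succ_right]
  field_simp
  ring

lemma wzTerm_sixtyFour_recurrence_zero (j : ℕ) :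
    ((j : ℚ) + 1) ^ 3 * wzTerm 64 (-1 / 64) 2 (j + 1) 0 -
        8 * (2 * j + 1) ^ 3 * wzTerm 64 (-1 / 64) 2 j 0 =
      wzMate (-128 * (6 * j + 5)) 64 (-1 / 64) 2 j 0 := by
  have h2 : (centralDesc (j + 2) 2 : ℚ) =
      2 * (2 * (j + 1) + 1) * (2 * (2 * j + 1) * j.centralBinom) := by
    rw [centralDesc_succ_succ, centralDesc_succ_succ, centralDesc_zero_right]
    push_cast
    ring
  simp only [wzTerm, wzMate, mul_zero, mul_one, zero_add, add_zero, pow_zero, pow_one, h2,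
    centralDesc_zero_right]
  norm_num
  linear_combination 64 ^ (j + 1) * (j + 1 : ℚ) ^ 2 * cast_succ_mul_centralBinom_succ ℚ j

lemma wzTerm_sixtyFour_recurrence_succ (j k : ℕ) :
    ((j : ℚ) + 1) ^ 3 * wzTerm 64 (-1 / 64) 2 (j + 1) (k + 1) -
        8 * (2 * j + 1) ^ 3 * wzTerm 64 (-1 / 64) 2 j (k + 1) =
      wzMate (-128 * (6 * j + 5)) 64 (-1 / 64) 2 j (k + 1) -
        wzMate (-128 * (6 * j + 5)) 64 (-1 / 64) 2 j k := by
  simp only [wzTerm, wzMate]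
  rw [show j + 1 + 2 * (k + 1) = j + 2 * (k + 1) + 1 by ring,
    show j + 2 * (k + 1 + 1) = j + 2 * (k + 1) + 1 + 1 by ring,
    show 3 * (k + 1) = 3 * k + 2 + 1 by ring, Nat.factorial_succ]
  simp only [centralDesc_succ_succ]
  push_cast [cast_centralDesc_succ_right]
  field_simp
  ring

lemma eq_centralBinom_cube_of_recurrence {S : ℕ → ℚ} {N : ℕ} (h0 : S 0 = 1)
    (h : ∀ j < N, ((j : ℚ) + 1) ^ 3 * S (j + 1) = 8 * (2 * j + 1) ^ 3 * S j) {j : ℕ} (hj : j ≤ N) :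
    S j = (j.centralBinom : ℚ) ^ 3 := by
  induction j with
  | zero => simpa using h0
  | succ j ih =>
    have hj' : ((j : ℚ) + 1) ^ 3 ≠ 0 := by positivity
    apply mul_left_cancel₀ hj'
    rw [h j (by lia), ih (by lia), ← mul_pow, cast_succ_mul_centralBinom_succ]
    ring

lemma sum_wzTerm_eq_centralBinom_cube {q ρ : ℚ} {a : ℕ} (ha : a < 3) (c : ℕ → ℚ)
    (hzero : ∀ j : ℕ, ((j : ℚ) + 1) ^ 3 * wzTerm q ρ a (j + 1) 0 -
      8 * (2 * j + 1) ^ 3 * wzTerm q ρ a j 0 = wzMate (c j) q ρ a j 0)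
    (hsucc : ∀ j k : ℕ, ((j : ℚ) + 1) ^ 3 * wzTerm q ρ a (j + 1) (k + 1) -
      8 * (2 * j + 1) ^ 3 * wzTerm q ρ a j (k + 1) =
        wzMate (c j) q ρ a j (k + 1) - wzMate (c j) q ρ a j k) (j : ℕ) :
    ∑ k ∈ range (j + 1), wzTerm q ρ a j k = (j.centralBinom : ℚ) ^ 3 := by
  have telescope (i N : ℕ) : ((i : ℚ) + 1) ^ 3 * ∑ k ∈ range (N + 1), wzTerm q ρ a (i + 1) k -
      8 * (2 * i + 1) ^ 3 * ∑ k ∈ range (N + 1), wzTerm q ρ a i k = wzMate (c i) q ρ a i N := by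
    induction N with
    | zero => simpa using hzero i
    | succ N ih =>
      rw [sum_range_succ _ (N + 1), sum_range_succ _ (N + 1)]
      linear_combination ih + hsucc i N
  have mate_eq_zero {i N : ℕ} (h : i < N) : wzMate (c i) q ρ a i N = 0 := by
    rw [wzMate, centralDesc_eq_zero_of_lt (by nlinarith)]
    simp
  refine eq_centralBinom_cube_of_recurrence (S := fun i ↦ ∑ k ∈ range (j + 1), wzTerm q ρ a i k)
    (sum_wzTerm_zero ha q ρ j) (fun i hi ↦ ?_) le_rfl
  rw [← sub_eq_zero, telescope i j, mate_eq_zero hi]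

/-- The integer `(2s)! / (s! r! k!³)` with `s = r + 3k`: the coefficient, in terms of
`r = j - ek`, of the `k`-th summand in the expansions of `C(2j,j)³`. -/
def cubeCoeff (r k : ℕ) : ℕ :=
  (r + 3 * k).centralBinom * (r + 3 * k).choose (3 * k) * (3 * k).choose k * (2 * k).choose k

lemma factorial_three_mul (k : ℕ) :
    (3 * k).factorial = (3 * k).choose k * (2 * k).choose k * k.factorial ^ 3 := by
  have h3 := Nat.choose_mul_factorial_mul_factorial (show k ≤ 3 * k by lia)
  have h2 := Nat.choose_mul_factorial_mul_factorial (show k ≤ 2 * k by lia)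
  rw [show 3 * k - k = 2 * k by lia] at h3
  rw [show 2 * k - k = k by lia] at h2
  rw [← h3, ← h2]
  ring

lemma centralDesc_eq_cubeCoeff_mul (r k : ℕ) :
    centralDesc (r + 3 * k) (3 * k) = cubeCoeff r k * k.factorial ^ 3 := by
  rw [centralDesc, cubeCoeff, Nat.descFactorial_eq_factorial_mul_choose, factorial_three_mul]
  ring

lemma wzTerm_eq_cubeCoeff {q σ : ℚ} (hq : q ≠ 0) {e j k : ℕ} (he : e ≤ 3) (h : e * k ≤ j) :
    wzTerm q (σ / q ^ e) (3 - e) j k = σ ^ k * q ^ (j - e * k) * cubeCoeff (j - e * k) k := by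
  obtain ⟨r, rfl⟩ := Nat.exists_eq_add_of_le h
  have hs : e * k + r + (3 - e) * k = r + 3 * k := by
    rw [add_right_comm, ← add_mul, Nat.add_sub_cancel' he, add_comm]
  have hk : (k.factorial : ℚ) ≠ 0 := by positivity
  rw [wzTerm, hs, centralDesc_eq_cubeCoeff_mul, Nat.add_sub_cancel_left]
  push_cast
  rw [pow_add, pow_mul, div_pow]
  field_simp

lemma sum_wzTerm_eq_sum_cubeCoeff {q σ : ℚ} (hq : q ≠ 0) {e : ℕ} (he0 : 0 < e) (he3 : e ≤ 3)
    (j : ℕ) :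
    ∑ k ∈ range (j + 1), wzTerm q (σ / q ^ e) (3 - e) j k =
      ∑ k ∈ range (j / e + 1), σ ^ k * q ^ (j - e * k) * cubeCoeff (j - e * k) k := by
  symm
  refine sum_subset_zero_on_sdiff (range_mono (by gcongr; exact Nat.div_le_self j e))
    (fun k hk ↦ ?_) (fun k hk ↦ ?_)
  · have hjk : j < e * k := by
      rw [mul_comm, ← Nat.div_lt_iff_lt_mul he0]
      simp only [mem_sdiff, mem_range] at hk
      lia
    have hs : j + (3 - e) * k < 3 * k := by
      zify [he3] at hjk ⊢
      linarith
    simp [wzTerm, centralDesc_eq_zero_of_lt hs]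
  · have hjk : e * k ≤ j := by
      rw [mul_comm, ← Nat.le_div_iff_mul_le he0]
      exact Nat.lt_succ_iff.1 (mem_range.1 hk)
    exact (wzTerm_eq_cubeCoeff hq he3 hjk).symm

theorem centralBinom_cube_eq_sum_four_pow (j : ℕ) :
    j.centralBinom ^ 3 = ∑ k ∈ range (j / 2 + 1), 4 ^ (j - 2 * k) * cubeCoeff (j - 2 * k) k := by
  have h := sum_wzTerm_eq_sum_cubeCoeff (q := 4) (σ := 1) (e := 2) (by simp) (by simp) (by simp) j
  rw [show (1 : ℚ) / 4 ^ 2 = 1 / 16 by norm_num, sum_wzTerm_eq_centralBinom_cube (by simp) _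
    wzTerm_four_recurrence_zero wzTerm_four_recurrence_succ] at h
  simp only [one_pow, one_mul] at h
  exact_mod_cast h

theorem centralBinom_cube_eq_sum_sixtyFour_pow (j : ℕ) :
    (j.centralBinom : ℤ) ^ 3 =
      ∑ k ∈ range (j + 1), (-1) ^ k * 64 ^ (j - k) * (cubeCoeff (j - k) k : ℤ) := by
  have h := sum_wzTerm_eq_sum_cubeCoeff (q := 64) (σ := -1) (e := 1) (by simp) (by simp) (by simp) j
  rw [pow_one, sum_wzTerm_eq_centralBinom_cube (by simp) _
    wzTerm_sixtyFour_recurrence_zero wzTerm_sixtyFour_recurrence_succ] at h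
  simp only [one_mul, Nat.div_one] at h
  exact_mod_cast h

/-! ### Reduction modulo an odd prime -/

/-- The integer `C(2k,k) C(3k,k) C(6k,3k) = (6k)! / ((3k)! k!³)`, which is `cubeCoeff 0 k`; these
are the coefficients of Ramanujan's series of level one. -/
def levelOneCoeff (k : ℕ) : ℕ :=
  (2 * k).choose k * (3 * k).choose k * (6 * k).choose (3 * k)

lemma cast_choose_succ_mul_succ (R : Type*) [CommRing R] (n s : ℕ) :
    (n.choose (s + 1) : R) * (s + 1) = n.choose s * (n - s) := by
  have h := congrArg (Nat.cast : ℕ → R) (Nat.choose_succ_right_eq n s)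
  obtain hs | hs := le_or_gt s n
  · simpa [Nat.cast_sub hs] using h
  · simp [Nat.choose_eq_zero_of_lt hs, Nat.choose_eq_zero_of_lt (hs.trans (Nat.lt_succ_self s))]

lemma sum_range_choose_mul_pow {R : Type*} [CommSemiring R] {n N : ℕ} (h : n < N) (y : R) :
    ∑ r ∈ range N, n.choose r * y ^ r = (1 + y) ^ n := by
  rw [add_comm, add_pow]
  symm
  refine sum_subset_zero_on_sdiff (range_mono h) (fun r hr ↦ ?_)
    (fun r _ ↦ by rw [one_pow, mul_one, mul_comm])
  simp only [mem_sdiff, mem_range] at hr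
  simp [Nat.choose_eq_zero_of_lt (show n < r by lia)]

section CharP

variable {R : Type*} [CommRing R] {p : ℕ} [CharP R p] [Fact p.Prime]

lemma cast_centralBinom_eq_neg_four_pow_mul_choose (hp : Odd p) {s : ℕ} (hs : s < p) :
    (s.centralBinom : R) = (-4) ^ s * (p / 2).choose s := by
  have hp0 : 2 * ((p / 2 : ℕ) : R) + 1 = 0 := by
    have h := CharP.cast_eq_zero R p
    rw [← Nat.two_mul_div_two_add_one_of_odd hp] at h
    exact_mod_cast h
  induction s with
  | zero => simp
  | succ s ih =>
    have hunit : IsUnit ((s : R) + 1) := by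
      rw [← Nat.cast_succ, CharP.isUnit_natCast_iff (Fact.out : p.Prime)]
      exact Nat.not_dvd_of_pos_of_lt s.succ_pos hs
    apply hunit.mul_left_cancel
    rw [cast_succ_mul_centralBinom_succ, ih (by lia)]
    linear_combination 4 * (-4) ^ s * cast_choose_succ_mul_succ R (p / 2) s +
      2 * (-4) ^ s * ((p / 2).choose s : R) * hp0

lemma cast_cubeCoeff_eq_zero (hp : Odd p) {r k : ℕ} (hr : r < p) (hk : k < p)
    (hpk : p / 2 < 3 * k) : (cubeCoeff r k : R) = 0 := by
  have hprime : p.Prime := Fact.out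
  obtain h | h := lt_or_ge (r + 3 * k) p
  · rw [cubeCoeff]
    push_cast
    rw [cast_centralBinom_eq_neg_four_pow_mul_choose hp h, Nat.choose_eq_zero_of_lt (by lia)]
    simp
  · have hfact : (r + 3 * k).choose (3 * k) * (3 * k).choose k * (2 * k).choose k *
        (r.factorial * k.factorial ^ 3) = (r + 3 * k).factorial := by
      have := Nat.add_choose_mul_factorial_mul_factorial r (3 * k)
      rw [factorial_three_mul] at this
      rw [← this, ← Nat.choose_symm_add]
      ring
    have hdvd : p ∣ (r + 3 * k).choose (3 * k) * (3 * k).choose k * (2 * k).choose k := by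
      have hcop : p.Coprime (r.factorial * k.factorial ^ 3) :=
        (hprime.coprime_factorial_of_lt hr).mul_right
          ((hprime.coprime_factorial_of_lt hk).pow_right 3)
      exact hcop.dvd_of_dvd_mul_right (hfact ▸ hprime.dvd_factorial.2 h)
    rw [CharP.cast_eq_zero_iff R p, cubeCoeff, mul_assoc, mul_assoc, ← mul_assoc (Nat.choose _ _)]
    exact hdvd.mul_left _

lemma cast_cubeCoeff (hp : Odd p) {r k : ℕ} (hr : r + 3 * k < p) :
    (cubeCoeff r k : R) = levelOneCoeff k * ((-4) ^ r * (p / 2 - 3 * k).choose r) := by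
  have hc : ((p / 2).choose (r + 3 * k) : R) * (r + 3 * k).choose (3 * k) =
      (p / 2).choose (3 * k) * (p / 2 - 3 * k).choose r := by
    simpa using congrArg (Nat.cast : ℕ → R)
      (Nat.choose_mul (n := p / 2) (Nat.le_add_left (3 * k) r))
  have h6 : ((6 * k).choose (3 * k) : R) = (-4) ^ (3 * k) * (p / 2).choose (3 * k) := by
    rw [← cast_centralBinom_eq_neg_four_pow_mul_choose hp (by lia),
      Nat.centralBinom_eq_two_mul_choose, show 2 * (3 * k) = 6 * k by ring]
  rw [cubeCoeff, levelOneCoeff]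
  push_cast
  rw [cast_centralBinom_eq_neg_four_pow_mul_choose hp hr, h6]
  linear_combination (-4) ^ (r + 3 * k) * ((3 * k).choose k : R) * (2 * k).choose k * hc

lemma sum_Ico_cubeCoeff_mul_pow (hp : Odd p) {e k : ℕ} (he3 : e ≤ 3) (hk : 3 * k ≤ p / 2)
    (σ q x : R) :
    ∑ j ∈ Ico (e * k) (p / 2 + 1), σ ^ k * q ^ (j - e * k) * cubeCoeff (j - e * k) k * x ^ j =
      levelOneCoeff k * (σ * x ^ e) ^ k * (1 - 4 * q * x) ^ (p / 2 - 3 * k) := by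
  have hek : e * k ≤ 3 * k := by gcongr
  rw [sum_Ico_eq_sum_range, sub_eq_add_neg,
    ← sum_range_choose_mul_pow (N := p / 2 + 1 - e * k) (by lia), mul_sum]
  refine sum_congr rfl fun r hr ↦ ?_
  have hrk : r + 3 * k < p := by
    have := Nat.two_mul_div_two_add_one_of_odd hp
    rw [mem_range] at hr
    lia
  rw [Nat.add_sub_cancel_left, cast_cubeCoeff hp hrk]
  ring

lemma sum_sum_cubeCoeff_mul_pow (hp : Odd p) {e : ℕ} (he0 : 0 < e) (he3 : e ≤ 3) (σ q x : R) :
    ∑ j ∈ range (p / 2 + 1), (∑ k ∈ range (j / e + 1),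
        σ ^ k * q ^ (j - e * k) * cubeCoeff (j - e * k) k) * x ^ j =
      ∑ k ∈ range (p / 6 + 1),
        levelOneCoeff k * (σ * x ^ e) ^ k * (1 - 4 * q * x) ^ (p / 2 - 3 * k) := by
  have hswap : ∀ j k, j ∈ range (p / 2 + 1) ∧ k ∈ range (j / e + 1) ↔
      j ∈ Ico (e * k) (p / 2 + 1) ∧ k ∈ range (p / 2 + 1) := by
    intro j k
    have hke : k ≤ e * k := Nat.le_mul_of_pos_left k he0
    simp only [mem_range, mem_Ico, Nat.lt_succ_iff, Nat.le_div_iff_mul_le he0, mul_comm k e]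
    lia
  simp only [sum_mul]
  rw [sum_comm' hswap]
  symm
  refine sum_subset_zero_on_sdiff (range_mono (by lia)) (fun k hk ↦ ?_) fun k hk ↦ ?_
  · refine sum_eq_zero fun j hj ↦ ?_
    simp only [mem_sdiff, mem_range, mem_Ico] at hk hj
    rw [cast_cubeCoeff_eq_zero hp (by lia) (by lia) (by lia)]
    simp
  · rw [mem_range] at hk
    exact (sum_Ico_cubeCoeff_mul_pow hp he3 (by lia) σ q x).symm

theorem sum_centralBinom_cube_mul_pow_eq_sum_sq (hp : Odd p) (x : R) :
    ∑ j ∈ range (p / 2 + 1), (j.centralBinom : R) ^ 3 * x ^ j =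
      ∑ k ∈ range (p / 6 + 1),
        levelOneCoeff k * (x ^ 2) ^ k * (1 - 16 * x) ^ (p / 2 - 3 * k) := by
  have h (j : ℕ) := congrArg (Nat.cast : ℕ → R) (centralBinom_cube_eq_sum_four_pow j)
  push_cast at h
  have hsum := sum_sum_cubeCoeff_mul_pow hp two_pos (by simp) 1 4 x
  norm_num only [one_pow, one_mul] at hsum
  simp only [h, hsum]

theorem sum_centralBinom_cube_mul_pow_eq_sum_neg (hp : Odd p) (x : R) :
    ∑ j ∈ range (p / 2 + 1), (j.centralBinom : R) ^ 3 * x ^ j =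
      ∑ k ∈ range (p / 6 + 1),
        levelOneCoeff k * (-x) ^ k * (1 - 256 * x) ^ (p / 2 - 3 * k) := by
  have h (j : ℕ) := congrArg (Int.cast : ℤ → R) (centralBinom_cube_eq_sum_sixtyFour_pow j)
  push_cast at h
  have hsum := sum_sum_cubeCoeff_mul_pow hp one_pos (by simp) (-1) 64 x
  norm_num only [pow_one, one_mul, neg_mul, Nat.div_one] at hsum
  simp only [h, hsum]

end CharP

/-! ### Extracting the Legendre symbol -/

lemma one_sub_div_pow_eq_legendreSym_mul {p : ℕ} [Fact p.Prime] {m c : ℤ} (hm : (m : ZMod p) ≠ 0)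
    (hc : (m : ZMod p) - c ≠ 0) {k : ℕ} (hk : 3 * k ≤ p / 2) :
    (1 - c * (m : ZMod p)⁻¹) ^ (p / 2 - 3 * k) =
      (legendreSym p (m * (m - c)) : ZMod p) * (((m : ZMod p) / (m - c)) ^ 3) ^ k := by
  have hsq : (m : ZMod p) ^ (p / 2) * (m : ZMod p) ^ (p / 2) = 1 := by
    obtain h | h := ZMod.pow_div_two_eq_neg_one_or_one p hm <;> simp [h]
  rw [legendreSym.eq_pow, show 1 - c * (m : ZMod p)⁻¹ = (m - c) / m by field_simp,
    pow_sub₀ _ (div_ne_zero hc hm) hk, ← inv_pow, inv_div, pow_mul, div_pow _ _ (p / 2),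
    div_eq_mul_inv _ (_ ^ _), ← eq_inv_of_mul_eq_one_left hsq]
  push_cast
  rw [mul_pow _ _ (p / 2), mul_comm (_ ^ (p / 2))]

lemma sum_mul_one_sub_div_pow_eq_legendreSym_mul {p : ℕ} [Fact p.Prime] {m c : ℤ}
    (hm : (m : ZMod p) ≠ 0) (hc : (m : ZMod p) - c ≠ 0) (a : ℕ → ZMod p) (y : ZMod p) :
    ∑ k ∈ range (p / 6 + 1), a k * y ^ k * (1 - c * (m : ZMod p)⁻¹) ^ (p / 2 - 3 * k) =
      legendreSym p (m * (m - c)) *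
        ∑ k ∈ range (p / 6 + 1), a k * (y * ((m : ZMod p) / (m - c)) ^ 3) ^ k := by
  rw [mul_sum]
  refine sum_congr rfl fun k hk ↦ ?_
  rw [mem_range] at hk
  rw [one_sub_div_pow_eq_legendreSym_mul hm hc (by lia), mul_pow]
  ring

theorem sum_centralBinom_cube_div_pow_eq_legendreSym_sub_sixteen {p : ℕ} [Fact p.Prime]
    (hp : Odd p) {m : ℤ} (hm : (m : ZMod p) ≠ 0) (hm16 : (m : ZMod p) - 16 ≠ 0) :
    ∑ k ∈ range (p / 2 + 1), (k.centralBinom : ZMod p) ^ 3 / (m : ZMod p) ^ k =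
      legendreSym p (m * (m - 16)) * ∑ k ∈ range (p / 6 + 1),
        levelOneCoeff k * ((m : ZMod p) / ((m : ZMod p) - 16) ^ 3) ^ k := by
  have h := sum_mul_one_sub_div_pow_eq_legendreSym_mul hm (c := 16) (mod_cast hm16)
    (fun k ↦ levelOneCoeff k) ((m : ZMod p)⁻¹ ^ 2)
  have hbase : (m : ZMod p)⁻¹ ^ 2 * (m / (m - 16)) ^ 3 = m / (m - 16) ^ 3 := by field_simp
  simp only [Int.cast_ofNat, hbase] at h
  simp only [div_eq_mul_inv _ (_ ^ _), ← inv_pow (m : ZMod p)]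
  rw [sum_centralBinom_cube_mul_pow_eq_sum_sq hp, h]
  simp only [div_eq_mul_inv]

theorem sum_centralBinom_cube_div_pow_eq_legendreSym_sub_two_fifty_six {p : ℕ} [Fact p.Prime]
    (hp : Odd p) {m : ℤ} (hm : (m : ZMod p) ≠ 0) (hm256 : (m : ZMod p) - 256 ≠ 0) :
    ∑ k ∈ range (p / 2 + 1), (k.centralBinom : ZMod p) ^ 3 / (m : ZMod p) ^ k =
      legendreSym p (m * (m - 256)) * ∑ k ∈ range (p / 6 + 1),
        levelOneCoeff k * ((m : ZMod p) ^ 2 / (256 - (m : ZMod p)) ^ 3) ^ k := by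
  have h := sum_mul_one_sub_div_pow_eq_legendreSym_mul hm (c := 256) (mod_cast hm256)
    (fun k ↦ levelOneCoeff k) (-(m : ZMod p)⁻¹)
  have hbase : -(m : ZMod p)⁻¹ * (m / (m - 256)) ^ 3 = m ^ 2 / (256 - m) ^ 3 := by
    rw [← neg_sub (m : ZMod p) 256, Odd.neg_pow (by decide)]
    field_simp
  simp only [Int.cast_ofNat, hbase] at h
  simp only [div_eq_mul_inv _ (_ ^ _), ← inv_pow (m : ZMod p)]
  rw [sum_centralBinom_cube_mul_pow_eq_sum_neg hp, h]
  simp only [div_eq_mul_inv]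

theorem stmt_0 (p : ℕ) [Fact p.Prime] (hp : 3 < p) (m : ℤ)
    (hm : ¬ (p : ℤ) ∣ m * (m - 16) * (m - 256)) :
    (∑ k ∈ Finset.range ((p - 1) / 2 + 1),
        (Nat.choose (2 * k) k : ZMod p) ^ 3 / (m : ZMod p) ^ k)
      = ((legendreSym p (m * (m - 16)) : ℤ) : ZMod p) *
          ∑ k ∈ Finset.range (p / 6 + 1),
            (Nat.choose (2 * k) k : ZMod p) * (Nat.choose (3 * k) k : ZMod p) *
              (Nat.choose (6 * k) (3 * k) : ZMod p) *
              ((m : ZMod p) / ((m : ZMod p) - 16) ^ 3) ^ k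
    ∧
    (∑ k ∈ Finset.range ((p - 1) / 2 + 1),
        (Nat.choose (2 * k) k : ZMod p) ^ 3 / (m : ZMod p) ^ k)
      = ((legendreSym p (m * (m - 256)) : ℤ) : ZMod p) *
          ∑ k ∈ Finset.range (p / 6 + 1),
            (Nat.choose (2 * k) k : ZMod p) * (Nat.choose (3 * k) k : ZMod p) *
              (Nat.choose (6 * k) (3 * k) : ZMod p) *
              ((m : ZMod p) ^ 2 / (256 - (m : ZMod p)) ^ 3) ^ k := by
  have hodd : Odd p := (Fact.out : p.Prime).odd_of_ne_two (by lia)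
  rw [← ZMod.intCast_zmod_eq_zero_iff_dvd] at hm
  push_cast at hm
  obtain ⟨⟨hm0, hm16⟩, hm256⟩ :
      ((m : ZMod p) ≠ 0 ∧ (m : ZMod p) - 16 ≠ 0) ∧ (m : ZMod p) - 256 ≠ 0 := by
    simpa only [mul_eq_zero, not_or, ne_eq] using hm
  have h16 := sum_centralBinom_cube_div_pow_eq_legendreSym_sub_sixteen hodd hm0 hm16
  have h256 := sum_centralBinom_cube_div_pow_eq_legendreSym_sub_two_fifty_six hodd hm0 hm256
  simp only [Nat.centralBinom_eq_two_mul_choose, levelOneCoeff, Nat.cast_mul] at h16 h256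
  rw [show (p - 1) / 2 = p / 2 by have := Nat.odd_iff.1 hodd; lia]
  exact ⟨h16, h256⟩
end

section
/- Let p > 3 be a prime and let t be an integer with 4t ≢ 5 (mod p) and 4t ≢ -5 (mod p). Then Σ_{k=0}^{(p-1)/2} C(2k,k)^2·C(3k,k) · ((1-t^2)/108)^k ≡ (5-4t | p) · Σ_{k=0}^{⌊p/6⌋} C(2k,k)·C(3k,k)·C(6k,3k) · ((t-1)(t+1)^3/(432(4t-5)^3))^k ≡ (5+4t | p) · Σ_{k=0}^{⌊p/6⌋} C(2k,k)·C(3k,k)·C(6k,3k) · ((t+1)(1-t)^3/(432(4t+5)^3))^k (mod p). -/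
/-! Let `θ = z d/dz` with `z = 1 - t²`. The left-hand side, as a polynomial in `t` over a ring of
characteristic `p`, is killed by the hypergeometric operator `18θ³ - z(2θ+1)(3θ+1)(3θ+2)`: the
image of a partial sum telescopes to its last term, which vanishes because `(p-1)/2` is congruent
to `-1/2`. Multiplying the right-hand side by `(5-4t)^((p-1)/2)` also makes it a polynomial in `t`,
and the change of variables `w = (1-t)(1+t)³/(5-4t)³` shows that it is killed by the same operator,
this time because `⌊p/6⌋` is congruent to `-1/6` or `-5/6`. At `t = 1` the only exponent of the
operator is `0`, so a solution of degree less than `p` is determined by its value there, and both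
sides take the value `1`. The second congruence is the first one at `-t`. -/

open Finset

namespace HypergeometricCongruence

open Polynomial

section Coefficients

/-- The trinomial coefficient `(3k)! / k!³`. -/
def trinom (k : ℕ) : ℕ := (2 * k).choose k * (3 * k).choose k

/-- The coefficient of `z^k` in the hypergeometric series `₃F₂(1/2, 1/3, 2/3; 1, 1; 108 z)`. -/
def leftCoeff (k : ℕ) : ℕ := (2 * k).choose k ^ 2 * (3 * k).choose k

/-- The coefficient of `z^k` in the hypergeometric series `₃F₂(1/2, 1/6, 5/6; 1, 1; 1728 z)`. -/
def rightCoeff (k : ℕ) : ℕ := (2 * k).choose k * (3 * k).choose k * (6 * k).choose (3 * k)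

lemma trinom_mul_factorial_pow (k : ℕ) : trinom k * k.factorial ^ 3 = (3 * k).factorial := by
  have h2 := Nat.add_choose_mul_factorial_mul_factorial k k
  have h3 := Nat.add_choose_mul_factorial_mul_factorial (2 * k) k
  rw [← two_mul] at h2
  rw [show 2 * k + k = 3 * k by ring] at h3
  rw [trinom, ← h3, ← h2]
  ring

lemma succ_sq_mul_trinom_succ (k : ℕ) :
    (k + 1) ^ 2 * trinom (k + 1) = 3 * (3 * k + 1) * (3 * k + 2) * trinom k := by
  apply Nat.eq_of_mul_eq_mul_right (show 0 < (k + 1) * k.factorial ^ 3 by positivity)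
  calc (k + 1) ^ 2 * trinom (k + 1) * ((k + 1) * k.factorial ^ 3)
      = trinom (k + 1) * (k + 1).factorial ^ 3 := by rw [Nat.factorial_succ]; ring
    _ = (3 * k + 3) * (3 * k + 2) * (3 * k + 1) * (3 * k).factorial := by
      rw [trinom_mul_factorial_pow, show 3 * (k + 1) = 3 * k + 1 + 1 + 1 by ring]
      simp only [Nat.factorial_succ]
      ring
    _ = 3 * (3 * k + 1) * (3 * k + 2) * trinom k * ((k + 1) * k.factorial ^ 3) := by
      rw [← trinom_mul_factorial_pow]; ring

lemma succ_mul_centralBinom_three_mul_succ (k : ℕ) :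
    (k + 1) * (3 * k + 1) * (3 * k + 2) * Nat.centralBinom (3 * (k + 1)) =
      8 * (2 * k + 1) * (6 * k + 1) * (6 * k + 5) * Nat.centralBinom (3 * k) := by
  have h1 := Nat.succ_mul_centralBinom_succ (3 * k)
  have h2 := Nat.succ_mul_centralBinom_succ (3 * k + 1)
  have h3 := Nat.succ_mul_centralBinom_succ (3 * k + 2)
  apply Nat.eq_of_mul_eq_mul_left three_pos
  rw [show 3 * (k + 1) = 3 * k + 2 + 1 by ring]
  linear_combination (3 * k + 1) * (3 * k + 2) * h3 + 2 * (6 * k + 5) * (3 * k + 1) * h2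
    + 4 * (6 * k + 5) * (6 * k + 3) * h1

lemma succ_pow_mul_leftCoeff_succ (k : ℕ) :
    (k + 1) ^ 3 * leftCoeff (k + 1) =
      6 * ((2 * k + 1) * (3 * k + 1) * (3 * k + 2)) * leftCoeff k := by
  have hl (j : ℕ) : leftCoeff j = j.centralBinom * trinom j := by
    rw [leftCoeff, trinom, Nat.centralBinom]; ring
  have hb := Nat.succ_mul_centralBinom_succ k
  have ht := succ_sq_mul_trinom_succ k
  rw [hl, hl]
  calc (k + 1) ^ 3 * ((k + 1).centralBinom * trinom (k + 1))
      = ((k + 1) * (k + 1).centralBinom) * ((k + 1) ^ 2 * trinom (k + 1)) := by ring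
    _ = 6 * ((2 * k + 1) * (3 * k + 1) * (3 * k + 2)) * (k.centralBinom * trinom k) := by
      rw [hb, ht]; ring

lemma succ_pow_mul_rightCoeff_succ (k : ℕ) :
    (k + 1) ^ 3 * rightCoeff (k + 1) =
      24 * ((2 * k + 1) * (6 * k + 1) * (6 * k + 5)) * rightCoeff k := by
  have hr (j : ℕ) : rightCoeff j = trinom j * (3 * j).centralBinom := by
    rw [rightCoeff, trinom, Nat.centralBinom, show 6 * j = 2 * (3 * j) by ring]
  have hb := succ_mul_centralBinom_three_mul_succ k
  have ht := succ_sq_mul_trinom_succ k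
  rw [hr, hr]
  apply Nat.eq_of_mul_eq_mul_right (show 0 < (3 * k + 1) * (3 * k + 2) by positivity)
  calc (k + 1) ^ 3 * (trinom (k + 1) * (3 * (k + 1)).centralBinom) * ((3 * k + 1) * (3 * k + 2))
      = ((k + 1) ^ 2 * trinom (k + 1)) *
          ((k + 1) * (3 * k + 1) * (3 * k + 2) * (3 * (k + 1)).centralBinom) := by ring
    _ = 24 * ((2 * k + 1) * (6 * k + 1) * (6 * k + 5)) * (trinom k * (3 * k).centralBinom) *
          ((3 * k + 1) * (3 * k + 2)) := by rw [hb, ht]; ring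

end Coefficients

section Telescoping

variable {R M N : Type*} [CommRing R] [AddCommGroup M] [Module R M] [AddCommGroup N] [Module R N]

lemma map_sum_smul_eq_zero_of_two_term (L : M →ₗ[R] N) {a α c : ℕ → R} {e : ℕ → M} {g : ℕ → N}
    {n : ℕ} (hα : α 0 = 0) (hc : c n = 0) (ha : ∀ k, α (k + 1) * a (k + 1) = c k * a k)
    (he : ∀ k ≤ n, L (e k) = α k • g k - c k • g (k + 1)) :
    L (∑ k ∈ range (n + 1), a k • e k) = 0 := by
  have hterm : ∀ k ∈ range (n + 1),
      L (a k • e k) = (α k * a k) • g k - (α (k + 1) * a (k + 1)) • g (k + 1) := by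
    intro k hk
    rw [map_smul, he k (Nat.lt_succ_iff.mp (mem_range.mp hk)), ha, smul_sub, smul_smul, smul_smul,
      mul_comm (a k), mul_comm (a k)]
  rw [map_sum, sum_congr rfl hterm, sum_range_sub' (fun k ↦ (α k * a k) • g k), ha, hα, hc]
  simp only [zero_mul, zero_smul, sub_zero]

end Telescoping

section LogarithmicDerivative

variable {R A : Type*} [CommRing R] [CommRing A] [Algebra R A] {D : Derivation R A A}

/-- `r` is a logarithmic derivative of `a` with respect to the derivation `D`; stated without
division, since `a` need not be a unit. -/
def HasLogDeriv (D : Derivation R A A) (a r : A) : Prop := D a = a * r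

lemma HasLogDeriv.mul {a b r s : A} (ha : HasLogDeriv D a r) (hb : HasLogDeriv D b s) :
    HasLogDeriv D (a * b) (r + s) := by
  unfold HasLogDeriv at *
  rw [D.leibniz, ha, hb, smul_eq_mul, smul_eq_mul]
  ring

lemma HasLogDeriv.pow {a r : A} (ha : HasLogDeriv D a r) (n : ℕ) :
    HasLogDeriv D (a ^ n) (n * r) := by
  induction n with
  | zero => simp [HasLogDeriv]
  | succ n ih =>
    rw [pow_succ, Nat.cast_succ, add_one_mul]
    exact ih.mul ha

end LogarithmicDerivative

section Operator

variable {R : Type*} [CommRing R]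

variable (R) in
/-- The derivation `(1 - t²)(5 - 4t) d/dt`, under which `1 - t`, `1 + t` and `5 - 4t` all have
polynomial logarithmic derivatives. -/
noncomputable def eulerDerivation : Derivation R R[X] R[X] :=
  mkDerivation R ((1 - X ^ 2) * (5 - 4 * X))

local notation "δ" => eulerDerivation _

variable (R) in
/-- The operator `-4t(5-4t)³ (18θ³ - z(2θ+1)(3θ+1)(3θ+2))`, where `z = 1 - t²` and
`θ = z d/dz`, expressed through `eulerDerivation R = -2t(5-4t) θ`. The factor in front clears the
denominators. -/
noncomputable def pullbackOperator : R[X] →ₗ[R] R[X] :=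
  (9 : R[X]) • ((eulerDerivation R).toLinearMap ^ 3)
    + (108 * (1 - X ^ 2) : R[X]) • ((eulerDerivation R).toLinearMap ^ 2)
    - (8 * (1 - X ^ 2) * (16 * X ^ 2 + 5 * X - 11) : R[X]) • (eulerDerivation R).toLinearMap
    + (8 * (1 - X ^ 2) * X * (5 - 4 * X) ^ 3 : R[X]) • LinearMap.id

lemma eulerDerivation_apply (f : R[X]) :
    δ f = (1 - X ^ 2) * (5 - 4 * X) * derivative f := by
  rw [eulerDerivation, mkDerivation_apply, smul_eq_mul, mul_comm]

lemma pullbackOperator_apply (f : R[X]) :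
    pullbackOperator R f = 9 * δ (δ (δ f)) + 108 * (1 - X ^ 2) * δ (δ f)
      - 8 * (1 - X ^ 2) * (16 * X ^ 2 + 5 * X - 11) * δ f
      + 8 * (1 - X ^ 2) * X * (5 - 4 * X) ^ 3 * f :=
  rfl

lemma HasLogDeriv.pullbackOperator_apply {f q : R[X]} (h : HasLogDeriv δ f q) :
    pullbackOperator R f = f * (9 * (q ^ 3 + 3 * q * δ q + δ (δ q))
      + 108 * (1 - X ^ 2) * (q ^ 2 + δ q)
      - 8 * (1 - X ^ 2) * (16 * X ^ 2 + 5 * X - 11) * q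
      + 8 * (1 - X ^ 2) * X * (5 - 4 * X) ^ 3) := by
  unfold HasLogDeriv at h
  simp only [HypergeometricCongruence.pullbackOperator_apply, h, Derivation.leibniz, map_add,
    smul_eq_mul]
  ring

lemma hasLogDeriv_one_sub_X : HasLogDeriv δ (1 - X : R[X]) (-(1 + X) * (5 - 4 * X)) := by
  simp only [HasLogDeriv, eulerDerivation_apply, derivative_sub, derivative_one, derivative_X]
  ring

lemma hasLogDeriv_one_add_X : HasLogDeriv δ (1 + X : R[X]) ((1 - X) * (5 - 4 * X)) := by
  simp only [HasLogDeriv, eulerDerivation_apply, derivative_add, derivative_one, derivative_X]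
  ring

lemma hasLogDeriv_five_sub : HasLogDeriv δ (5 - 4 * X : R[X]) (-4 * (1 - X ^ 2)) := by
  simp only [HasLogDeriv, eulerDerivation_apply, derivative_sub, derivative_mul, derivative_ofNat,
    derivative_X]
  ring

lemma hasLogDeriv_one_sub_X_sq :
    HasLogDeriv δ (1 - X ^ 2 : R[X]) (-2 * X * (5 - 4 * X)) := by
  convert hasLogDeriv_one_sub_X.mul hasLogDeriv_one_add_X using 1 <;> ring

lemma pullbackOperator_one_sub_X_sq_pow (k : ℕ) :
    pullbackOperator R ((1 - X ^ 2) ^ k) =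
      (18 * k ^ 3 : R) • (-4 * X * (5 - 4 * X) ^ 3 * (1 - X ^ 2) ^ k)
        - ((2 * k + 1) * (3 * k + 1) * (3 * k + 2) : R) •
          (-4 * X * (5 - 4 * X) ^ 3 * (1 - X ^ 2) ^ (k + 1)) := by
  rw [(hasLogDeriv_one_sub_X_sq.pow k).pullbackOperator_apply]
  simp only [eulerDerivation_apply, derivative_mul, derivative_sub, derivative_neg,
    derivative_X_pow, derivative_one, derivative_X, derivative_natCast, derivative_ofNat,
    derivative_zero, smul_eq_C_mul, map_mul, map_add, map_pow, map_natCast, map_ofNat, map_one]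
  push_cast
  ring

variable (R) in
/-- The polynomial `(5-4t)^m w^k` for `w = (1-t)(1+t)³/(5-4t)³`. The truncated subtraction is
harmless in the range `3k ≤ m`. -/
noncomputable def rightTerm (m k : ℕ) : R[X] :=
  (5 - 4 * X) ^ (m - 3 * k) * ((1 - X) * (1 + X) ^ 3) ^ k

lemma five_sub_pow_mul_rightTerm {m k : ℕ} (hk : 3 * k ≤ m) :
    (5 - 4 * X) ^ 3 * rightTerm R m k = rightTerm R (m + 3) k := by
  rw [rightTerm, rightTerm, show m + 3 - 3 * k = m - 3 * k + 3 by omega, pow_add]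
  ring

lemma mul_rightTerm (m k : ℕ) :
    (1 - X) * (1 + X) ^ 3 * rightTerm R m k = rightTerm R (m + 3) (k + 1) := by
  rw [rightTerm, rightTerm, show m + 3 - 3 * (k + 1) = m - 3 * k by omega, pow_succ _ k]
  ring

lemma hasLogDeriv_rightTerm {m k : ℕ} (hm : (2 * m + 1 : R) = 0) (hk : 3 * k ≤ m) :
    HasLogDeriv δ (rightTerm R m k)
      ((k : R[X]) * (2 * (2 * X ^ 2 - 14 * X + 11)) + 2 * (1 - X ^ 2)) := by
  have hm' : (2 * m + 1 : R[X]) = 0 := by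
    simpa only [map_add, map_mul, map_natCast, map_ofNat, map_one, map_zero] using
      congrArg (C : R → R[X]) hm
  convert (hasLogDeriv_five_sub.pow (m - 3 * k)).mul
    ((hasLogDeriv_one_sub_X.mul (hasLogDeriv_one_add_X.pow 3)).pow k) using 1
  · rfl
  rw [Nat.cast_sub hk]
  push_cast
  linear_combination 2 * (1 - X ^ 2) * hm'

lemma pullbackOperator_rightTerm {m k : ℕ} (hm : (2 * m + 1 : R) = 0) (hk : 3 * k ≤ m) :
    pullbackOperator R (rightTerm R m k) =
      (18 * k ^ 3 : R) • (4 * (2 * X ^ 2 - 14 * X + 11) * rightTerm R (m + 3) k)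
        - ((2 * k + 1) * (6 * k + 1) * (6 * k + 5) : R) •
          (4 * (2 * X ^ 2 - 14 * X + 11) * rightTerm R (m + 3) (k + 1)) := by
  rw [(hasLogDeriv_rightTerm hm hk).pullbackOperator_apply, ← five_sub_pow_mul_rightTerm hk,
    ← mul_rightTerm]
  simp only [eulerDerivation_apply, derivative_mul, derivative_sub,
    derivative_X_pow, derivative_one, derivative_X, derivative_natCast, derivative_ofNat,
    derivative_zero, smul_eq_C_mul, map_mul, map_add, map_pow, map_natCast, map_ofNat, map_one]
  push_cast
  ring

end Operator

section Uniqueness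

lemma natCast_ne_zero_of_pos_of_lt (R : Type*) [AddMonoidWithOne R] {p : ℕ} [CharP R p] {n : ℕ}
    (hpos : 0 < n) (hlt : n < p) : (n : R) ≠ 0 :=
  fun h ↦ Nat.not_dvd_of_pos_of_lt hpos hlt ((CharP.cast_eq_zero_iff R p n).mp h)

variable {R : Type*} [CommRing R]

lemma exists_eulerDerivation_X_sub_one_pow_mul (n : ℕ) (U : R[X]) :
    ∃ V : R[X], eulerDerivation R ((X - C 1) ^ n * U) = (X - C 1) ^ n * V ∧
      V.eval 1 = -2 * n * U.eval 1 := by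
  have hlog : HasLogDeriv (eulerDerivation R) (X - C 1) (-(1 + X) * (5 - 4 * X)) := by
    simp only [HasLogDeriv, eulerDerivation_apply, map_one, derivative_sub, derivative_X,
      derivative_one]
    ring
  refine ⟨(n : R[X]) * (-(1 + X) * (5 - 4 * X)) * U + eulerDerivation R U, ?_, ?_⟩
  · rw [Derivation.leibniz, hlog.pow n, smul_eq_mul, smul_eq_mul]
    ring
  · simp only [eulerDerivation_apply, eval_add, eval_mul, eval_natCast, eval_neg, eval_sub,
      eval_pow, eval_one, eval_X, eval_ofNat]
    ring

lemma exists_pullbackOperator_X_sub_one_pow_mul (n : ℕ) (U : R[X]) :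
    ∃ V : R[X], pullbackOperator R ((X - C 1) ^ n * U) = (X - C 1) ^ n * V ∧
      V.eval 1 = -72 * n ^ 3 * U.eval 1 := by
  obtain ⟨V₁, hV₁, hV₁_eval⟩ := exists_eulerDerivation_X_sub_one_pow_mul n U
  obtain ⟨V₂, hV₂, hV₂_eval⟩ := exists_eulerDerivation_X_sub_one_pow_mul n V₁
  obtain ⟨V₃, hV₃, hV₃_eval⟩ := exists_eulerDerivation_X_sub_one_pow_mul n V₂
  refine ⟨9 * V₃ + 108 * (1 - X ^ 2) * V₂ - 8 * (1 - X ^ 2) * (16 * X ^ 2 + 5 * X - 11) * V₁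
    + 8 * (1 - X ^ 2) * X * (5 - 4 * X) ^ 3 * U, ?_, ?_⟩
  · rw [pullbackOperator_apply, hV₁, hV₂, hV₃]
    ring
  · simp only [eval_add, eval_sub, eval_mul, eval_pow, eval_one, eval_X, eval_ofNat, hV₃_eval,
      hV₂_eval, hV₁_eval]
    ring

lemma eq_zero_of_pullbackOperator_eq_zero [IsDomain R] {p : ℕ} [CharP R p] (hp : 3 < p) {H : R[X]}
    (hL : pullbackOperator R H = 0) (hH_eval : H.eval 1 = 0) (hdeg : H.natDegree < p) : H = 0 := by
  by_contra hH
  obtain ⟨U, hU, hdvd⟩ := exists_eq_pow_rootMultiplicity_mul_and_not_dvd H hH 1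
  set n := H.rootMultiplicity 1
  have hU_eval : U.eval 1 ≠ 0 := fun h ↦ hdvd (dvd_iff_isRoot.mpr h)
  have hn_pos : 0 < n := (rootMultiplicity_pos hH).mpr hH_eval
  have hn_lt : n < p := by
    have hle := natDegree_le_of_dvd (pow_rootMultiplicity_dvd H 1) hH
    rw [natDegree_pow, natDegree_X_sub_C, mul_one] at hle
    exact hle.trans_lt hdeg
  obtain ⟨V, hV, hV_eval⟩ := exists_pullbackOperator_X_sub_one_pow_mul n U
  rw [← hU, hL, zero_eq_mul, or_iff_right (pow_ne_zero n (X_sub_C_ne_zero 1))] at hV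
  have hindicial : (2 : ℕ) ^ 3 * (3 : ℕ) ^ 2 * (n : R) ^ 3 * U.eval 1 = 0 := by
    rw [hV, eval_zero] at hV_eval
    push_cast
    linear_combination hV_eval
  have h2 : ((2 : ℕ) : R) ≠ 0 := natCast_ne_zero_of_pos_of_lt R two_pos (by omega)
  have h3 : ((3 : ℕ) : R) ≠ 0 := natCast_ne_zero_of_pos_of_lt R three_pos hp
  have hn : (n : R) ≠ 0 := natCast_ne_zero_of_pos_of_lt R hn_pos hn_lt
  exact mul_ne_zero (mul_ne_zero (mul_ne_zero (pow_ne_zero 3 h2) (pow_ne_zero 2 h3))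
    (pow_ne_zero 3 hn)) hU_eval hindicial

end Uniqueness

section PolynomialIdentity

variable {R : Type*} [CommRing R]

lemma eval_one_sum_smul_one_sub_X_sq_pow (a : ℕ → R) (m : ℕ) :
    (∑ k ∈ range (m + 1), a k • (1 - X ^ 2 : R[X]) ^ k).eval 1 = a 0 := by
  rw [eval_finsetSum, sum_range_succ', sum_eq_zero]
  · simp
  · intro k _
    simp

lemma eval_one_sum_smul_rightTerm (b : ℕ → R) (m n : ℕ) :
    (∑ k ∈ range (n + 1), b k • rightTerm R m k).eval 1 = b 0 := by
  rw [eval_finsetSum, sum_range_succ', sum_eq_zero]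
  · norm_num [rightTerm]
  · intro k _
    simp [rightTerm]

lemma natDegree_sum_smul_one_sub_X_sq_pow_le (a : ℕ → R) (m : ℕ) :
    (∑ k ∈ range (m + 1), a k • (1 - X ^ 2 : R[X]) ^ k).natDegree ≤ 2 * m := by
  refine natDegree_sum_le_of_forall_le _ _ fun k hk ↦ (natDegree_smul_le _ _).trans ?_
  have hbase : (1 - X ^ 2 : R[X]).natDegree ≤ 2 := by compute_degree
  refine (natDegree_pow_le_of_le k hbase).trans ?_
  have := mem_range.mp hk
  omega

lemma natDegree_rightTerm_le {m k : ℕ} (hk : 3 * k ≤ m) : (rightTerm R m k).natDegree ≤ m + k := by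
  have hfive : (5 - 4 * X : R[X]).natDegree ≤ 1 := by compute_degree
  have hquartic : ((1 - X) * (1 + X) ^ 3 : R[X]).natDegree ≤ 4 := by compute_degree
  refine (natDegree_mul_le_of_le (natDegree_pow_le_of_le _ hfive)
    (natDegree_pow_le_of_le _ hquartic)).trans ?_
  omega

lemma natDegree_sum_smul_rightTerm_le (b : ℕ → R) {m n : ℕ} (hn : 3 * n ≤ m) :
    (∑ k ∈ range (n + 1), b k • rightTerm R m k).natDegree ≤ 2 * m := by
  refine natDegree_sum_le_of_forall_le _ _ fun k hk ↦ (natDegree_smul_le _ _).trans ?_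
  have := mem_range.mp hk
  exact (natDegree_rightTerm_le (by omega)).trans (by omega)

theorem sum_smul_one_sub_X_sq_pow_eq_sum_smul_rightTerm [IsDomain R] {p m n : ℕ} [CharP R p]
    (hp : 3 < p) (hm : 2 * m + 1 = p) (hn : 6 * n + 1 = p ∨ 6 * n + 5 = p)
    {a b : ℕ → R} (hab : a 0 = b 0)
    (ha : ∀ k : ℕ, 18 * ((k + 1 : ℕ) : R) ^ 3 * a (k + 1) =
      (2 * k + 1) * (3 * k + 1) * (3 * k + 2) * a k)
    (hb : ∀ k : ℕ, 18 * ((k + 1 : ℕ) : R) ^ 3 * b (k + 1) =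
      (2 * k + 1) * (6 * k + 1) * (6 * k + 5) * b k) :
    ∑ k ∈ range (m + 1), a k • (1 - X ^ 2 : R[X]) ^ k =
      ∑ k ∈ range (n + 1), b k • rightTerm R m k := by
  have hm0 : (2 * m + 1 : R) = 0 := by
    simpa only [← hm, Nat.cast_add, Nat.cast_mul, Nat.cast_ofNat, Nat.cast_one] using
      CharP.cast_eq_zero R p
  have hn0 : (6 * n + 1 : R) * (6 * n + 5) = 0 := by
    have hdvd : p ∣ (6 * n + 1) * (6 * n + 5) := by
      rcases hn with h | h
      · exact h ▸ dvd_mul_right _ _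
      · exact h ▸ dvd_mul_left _ _
    exact_mod_cast (CharP.cast_eq_zero_iff R p _).mpr hdvd
  have hnm : 3 * n ≤ m := by omega
  have hleft : pullbackOperator R (∑ k ∈ range (m + 1), a k • (1 - X ^ 2 : R[X]) ^ k) = 0 :=
    map_sum_smul_eq_zero_of_two_term _ (α := fun k ↦ 18 * (k : R) ^ 3) (by simp)
      (by simp only [hm0, zero_mul]) ha fun k _ ↦ pullbackOperator_one_sub_X_sq_pow k
  have hright : pullbackOperator R (∑ k ∈ range (n + 1), b k • rightTerm R m k) = 0 :=
    map_sum_smul_eq_zero_of_two_term _ (α := fun k ↦ 18 * (k : R) ^ 3) (by simp)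
      (by simp only [mul_assoc, hn0, mul_zero]) hb
      fun k hk ↦ pullbackOperator_rightTerm hm0 (by omega)
  rw [← sub_eq_zero]
  apply eq_zero_of_pullbackOperator_eq_zero hp
  · rw [map_sub, hleft, hright, sub_zero]
  · rw [eval_sub, eval_one_sum_smul_one_sub_X_sq_pow, eval_one_sum_smul_rightTerm, hab, sub_self]
  · have := natDegree_sub_le_of_le (natDegree_sum_smul_one_sub_X_sq_pow_le a m)
      (natDegree_sum_smul_rightTerm_le b hnm)
    omega

end PolynomialIdentity

section Field

variable {K : Type*} [Field K]

lemma leftCoeff_div_succ (h2 : (2 : K) ≠ 0) (h3 : (3 : K) ≠ 0) (k : ℕ) :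
    18 * ((k + 1 : ℕ) : K) ^ 3 * (leftCoeff (k + 1) / 108 ^ (k + 1)) =
      (2 * k + 1) * (3 * k + 1) * (3 * k + 2) * (leftCoeff k / 108 ^ k) := by
  have h108 : (108 : K) ≠ 0 := by
    rw [show (108 : K) = 2 ^ 2 * 3 ^ 3 by norm_num]
    exact mul_ne_zero (pow_ne_zero 2 h2) (pow_ne_zero 3 h3)
  have h := congrArg (Nat.cast : ℕ → K) (succ_pow_mul_leftCoeff_succ k)
  push_cast at h ⊢
  rw [pow_succ]
  field_simp
  linear_combination 18 * 108 ^ k * h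

lemma rightCoeff_div_succ (h2 : (2 : K) ≠ 0) (h3 : (3 : K) ≠ 0) (k : ℕ) :
    18 * ((k + 1 : ℕ) : K) ^ 3 * (rightCoeff (k + 1) / 432 ^ (k + 1)) =
      (2 * k + 1) * (6 * k + 1) * (6 * k + 5) * (rightCoeff k / 432 ^ k) := by
  have h432 : (432 : K) ≠ 0 := by
    rw [show (432 : K) = 2 ^ 4 * 3 ^ 3 by norm_num]
    exact mul_ne_zero (pow_ne_zero 4 h2) (pow_ne_zero 3 h3)
  have h := congrArg (Nat.cast : ℕ → K) (succ_pow_mul_rightCoeff_succ k)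
  push_cast at h ⊢
  rw [pow_succ]
  field_simp
  linear_combination 18 * 432 ^ k * h

lemma eval_rightTerm {m k : ℕ} (hk : 3 * k ≤ m) {t : K} (ht : 4 * t - 5 ≠ 0) :
    (rightTerm K m k).eval t =
      (5 - 4 * t) ^ m * ((t - 1) * (t + 1) ^ 3 / (4 * t - 5) ^ 3) ^ k := by
  have hpow : (5 - 4 * t) ^ m = (5 - 4 * t) ^ (m - 3 * k) * ((5 - 4 * t) ^ 3) ^ k := by
    rw [← pow_mul, ← pow_add, Nat.sub_add_cancel hk]
  have hbase : (1 - t) * (1 + t) ^ 3 =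
      (5 - 4 * t) ^ 3 * ((t - 1) * (t + 1) ^ 3 / (4 * t - 5) ^ 3) := by
    rw [show (5 - 4 * t) ^ 3 = -(4 * t - 5) ^ 3 by ring, neg_mul,
      mul_div_cancel₀ _ (pow_ne_zero 3 ht)]
    ring
  simp only [rightTerm, eval_mul, eval_pow, eval_sub, eval_add, eval_one, eval_X, eval_ofNat]
  rw [hpow, hbase, mul_pow, mul_assoc]

theorem sum_leftCoeff_eq_pow_mul_sum_rightCoeff {p : ℕ} [CharP K p] (hp : 3 < p) {t : K}
    (ht : 4 * t - 5 ≠ 0) :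
    ∑ k ∈ range ((p - 1) / 2 + 1), (leftCoeff k : K) * ((1 - t ^ 2) / 108) ^ k =
      (5 - 4 * t) ^ (p / 2) * ∑ k ∈ range (p / 6 + 1),
        (rightCoeff k : K) * ((t - 1) * (t + 1) ^ 3 / (432 * (4 * t - 5) ^ 3)) ^ k := by
  have hprime : p.Prime := CharP.char_prime_of_ne_zero K (by omega)
  have hp2 : ¬ 2 ∣ p := (Nat.prime_dvd_prime_iff_eq Nat.prime_two hprime).not.mpr (by omega)
  have hp3 : ¬ 3 ∣ p := (Nat.prime_dvd_prime_iff_eq Nat.prime_three hprime).not.mpr (by omega)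
  have h2 : (2 : K) ≠ 0 := mod_cast natCast_ne_zero_of_pos_of_lt K two_pos (by omega : 2 < p)
  have h3 : (3 : K) ≠ 0 := mod_cast natCast_ne_zero_of_pos_of_lt K three_pos hp
  have hidentity := congrArg (eval t) <|
    sum_smul_one_sub_X_sq_pow_eq_sum_smul_rightTerm (R := K) (m := p / 2) (n := p / 6)
      hp (by omega) (by omega)
      (a := fun k ↦ leftCoeff k / 108 ^ k) (b := fun k ↦ rightCoeff k / 432 ^ k)
      (by simp [leftCoeff, rightCoeff]) (leftCoeff_div_succ h2 h3) (rightCoeff_div_succ h2 h3)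
  rw [eval_finsetSum, eval_finsetSum] at hidentity
  rw [show (p - 1) / 2 = p / 2 by omega, mul_sum]
  refine (sum_congr rfl ?_).trans (hidentity.trans (sum_congr rfl ?_))
  · intro k _
    simp only [eval_smul, eval_pow, eval_sub, eval_one, eval_X, smul_eq_mul, div_pow]
    ring
  · intro k hk
    have hk' : 3 * k ≤ p / 2 := by
      have := mem_range.mp hk
      omega
    rw [eval_smul, eval_rightTerm hk' ht, smul_eq_mul, mul_comm (432 : K), ← div_div, div_pow _ 432]
    ring

end Field

end HypergeometricCongruence

open HypergeometricCongruence in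
theorem stmt_1_general {K : Type*} [Field K] (p : ℕ) [CharP K p] (hp : 3 < p) (t : K)
    (h1 : 4 * t ≠ 5) (h2 : 4 * t ≠ -5) :
    (∑ k ∈ range ((p - 1) / 2 + 1),
        (Nat.choose (2 * k) k : K) ^ 2 * (Nat.choose (3 * k) k : K) * ((1 - t ^ 2) / 108) ^ k)
      = (5 - 4 * t) ^ (p / 2) * ∑ k ∈ range (p / 6 + 1),
          (Nat.choose (2 * k) k : K) * (Nat.choose (3 * k) k : K) *
            (Nat.choose (6 * k) (3 * k) : K) *
            ((t - 1) * (t + 1) ^ 3 / (432 * (4 * t - 5) ^ 3)) ^ k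
    ∧
    (∑ k ∈ range ((p - 1) / 2 + 1),
        (Nat.choose (2 * k) k : K) ^ 2 * (Nat.choose (3 * k) k : K) * ((1 - t ^ 2) / 108) ^ k)
      = (5 + 4 * t) ^ (p / 2) * ∑ k ∈ range (p / 6 + 1),
          (Nat.choose (2 * k) k : K) * (Nat.choose (3 * k) k : K) *
            (Nat.choose (6 * k) (3 * k) : K) *
            ((t + 1) * (1 - t) ^ 3 / (432 * (4 * t + 5) ^ 3)) ^ k := by
  have hpos := sum_leftCoeff_eq_pow_mul_sum_rightCoeff hp (sub_ne_zero.mpr h1)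
  have hneg := sum_leftCoeff_eq_pow_mul_sum_rightCoeff (t := -t) hp fun h ↦
    h2 (by linear_combination -h)
  have hquotient : (-t - 1) * (-t + 1) ^ 3 / (432 * (4 * -t - 5) ^ 3) =
      (t + 1) * (1 - t) ^ 3 / (432 * (4 * t + 5) ^ 3) := by
    rw [← neg_div_neg_eq]
    congr 1 <;> ring
  rw [neg_sq, hquotient, mul_neg, sub_neg_eq_add] at hneg
  simp only [leftCoeff, rightCoeff, Nat.cast_mul, Nat.cast_pow] at hpos hneg
  exact ⟨hpos, hneg⟩

theorem stmt_1 (p : ℕ) [Fact p.Prime] (hp : 3 < p) (t : ℤ)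
    (h1 : ¬ (4 * t ≡ 5 [ZMOD (p : ℤ)])) (h2 : ¬ (4 * t ≡ -5 [ZMOD (p : ℤ)])) :
    (∑ k ∈ Finset.range ((p - 1) / 2 + 1),
        (Nat.choose (2 * k) k : ZMod p) ^ 2 * (Nat.choose (3 * k) k : ZMod p) *
          ((1 - (t : ZMod p) ^ 2) / 108) ^ k)
      = ((legendreSym p (5 - 4 * t) : ℤ) : ZMod p) *
          ∑ k ∈ Finset.range (p / 6 + 1),
            (Nat.choose (2 * k) k : ZMod p) * (Nat.choose (3 * k) k : ZMod p) *
              (Nat.choose (6 * k) (3 * k) : ZMod p) *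
              (((t : ZMod p) - 1) * ((t : ZMod p) + 1) ^ 3 /
                (432 * (4 * (t : ZMod p) - 5) ^ 3)) ^ k
    ∧
    (∑ k ∈ Finset.range ((p - 1) / 2 + 1),
        (Nat.choose (2 * k) k : ZMod p) ^ 2 * (Nat.choose (3 * k) k : ZMod p) *
          ((1 - (t : ZMod p) ^ 2) / 108) ^ k)
      = ((legendreSym p (5 + 4 * t) : ℤ) : ZMod p) *
          ∑ k ∈ Finset.range (p / 6 + 1),
            (Nat.choose (2 * k) k : ZMod p) * (Nat.choose (3 * k) k : ZMod p) *
              (Nat.choose (6 * k) (3 * k) : ZMod p) *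
              (((t : ZMod p) + 1) * (1 - (t : ZMod p)) ^ 3 /
                (432 * (4 * (t : ZMod p) + 5) ^ 3)) ^ k := by
  have hpos : 4 * (t : ZMod p) ≠ 5 := fun h ↦
    h1 <| (ZMod.intCast_eq_intCast_iff _ _ p).mp (mod_cast h)
  have hneg : 4 * (t : ZMod p) ≠ -5 := fun h ↦
    h2 <| (ZMod.intCast_eq_intCast_iff _ _ p).mp (mod_cast h)
  simpa only [legendreSym.eq_pow, Int.cast_sub, Int.cast_add, Int.cast_mul, Int.cast_ofNat] using
    stmt_1_general p hp (t : ZMod p) hpos hneg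
end

section
/- For every nonnegative integer n, Σ_{k=0}^{⌊n/2⌋} C(2k,k)^2 · C(3k,k) · C(n+k,3k) · 4^{n-2k} = Σ_{k=0}^{n} C(2k,k) · C(2n-2k,n-k) · C(n,k)^2. -/
open Finset

/-!
Both sides satisfy the recurrence
`(n + 2)³ u (n + 2) - 2 (2n + 3) (5n² + 15n + 12) u (n + 1) + 64 (n + 1)³ u n = 0`
of the Domb numbers, which determines a sequence from its first two values. In each case the
recurrence is obtained by creative telescoping. On the right, with summand `w a b`, `a + b = n`, it
is the symmetric combination of `w (a + 1) (b + 1)`, `w (a + 1) b + w a (b + 1)` and `w a b` that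
telescopes: this keeps the certificate polynomial, at the price of boundary terms, which cancel.
-/

section Recurrence

variable {R : Type*} [CommRing R]

/-- The second-order difference operator whose kernel contains the Domb numbers. -/
def dombOperator (u : ℕ → R) (n : ℕ) : R :=
  (n + 2) ^ 3 * u (n + 2) - 2 * (2 * n + 3) * (5 * n ^ 2 + 15 * n + 12) * u (n + 1)
    + 64 * (n + 1) ^ 3 * u n

lemma dombOperator_sum {ι : Type*} (s : Finset ι) (u : ℕ → ι → R) (n : ℕ) :
    dombOperator (fun m ↦ ∑ i ∈ s, u m i) n = ∑ i ∈ s, dombOperator (fun m ↦ u m i) n := by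
  simp only [dombOperator, mul_sum, sum_sub_distrib, sum_add_distrib]

lemma eq_of_dombOperator_eq [NoZeroDivisors R] [CharZero R] {u v : ℕ → R}
    (h : ∀ n, dombOperator u n = dombOperator v n) (h₀ : u 0 = v 0) (h₁ : u 1 = v 1) (n : ℕ) :
    u n = v n := by
  induction n using Nat.twoStepInduction with
  | zero => exact h₀
  | one => exact h₁
  | more n ih ih' =>
    have leading_ne_zero : ((n : R) + 2) ^ 3 ≠ 0 := pow_ne_zero 3 (by norm_cast)
    have hn := h n
    simp only [dombOperator, ih, ih'] at hn
    exact mul_left_cancel₀ leading_ne_zero (by linear_combination hn)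

end Recurrence

section DombNumbers

/-- The summand of the `n`-th Domb number, indexed by the pairs with `a + b = n`. -/
def dombTerm (a b : ℕ) : ℕ :=
  a.centralBinom * b.centralBinom * (a + b).choose a ^ 2

/-- The Domb numbers `∑ C(2a, a) C(2b, b) C(n, a) ^ 2`, the sum being over `a + b = n`. -/
def domb (n : ℕ) : ℕ :=
  ∑ p ∈ antidiagonal n, dombTerm p.1 p.2

lemma dombTerm_comm (a b : ℕ) : dombTerm a b = dombTerm b a := by
  rw [dombTerm, dombTerm, Nat.choose_symm_add, add_comm a b, mul_comm a.centralBinom]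

lemma dombTerm_zero_right (a : ℕ) : dombTerm a 0 = a.centralBinom := by
  simp [dombTerm]

lemma succ_pow_three_mul_dombTerm_succ_left (a b : ℕ) :
    (a + 1) ^ 3 * dombTerm (a + 1) b = 2 * (2 * a + 1) * (a + b + 1) ^ 2 * dombTerm a b := by
  have hcentral := a.succ_mul_centralBinom_succ
  have hchoose := Nat.add_one_mul_choose_eq (a + b) a
  calc (a + 1) ^ 3 * dombTerm (a + 1) b
      = ((a + 1) * (a + 1).centralBinom) * b.centralBinom *
          ((a + b + 1).choose (a + 1) * (a + 1)) ^ 2 := by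
        rw [dombTerm, add_right_comm]; ring
    _ = 2 * (2 * a + 1) * (a + b + 1) ^ 2 * dombTerm a b := by
        rw [hcentral, ← hchoose, dombTerm]; ring

lemma succ_pow_three_mul_dombTerm_succ_right (a b : ℕ) :
    (b + 1) ^ 3 * dombTerm a (b + 1) = 2 * (2 * b + 1) * (a + b + 1) ^ 2 * dombTerm a b := by
  rw [dombTerm_comm a, dombTerm_comm a, succ_pow_three_mul_dombTerm_succ_left, add_comm b a]

/-- The telescoping certificate of the recurrence for the Domb numbers: its differences along
`a + b = n + 1` are the symmetric combination of the neighbouring values of `dombTerm`. -/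
def dombCertificate (a b : ℕ) : ℤ :=
  (a - b) * ((2 * (a + b) + 1) * (3 * (a + b) + 1) + 4 * a * b) * dombTerm a b

lemma dombCertificate_swap (a b : ℕ) : dombCertificate b a = -dombCertificate a b := by
  rw [dombCertificate, dombCertificate, dombTerm_comm]
  ring

lemma dombTerm_combination_eq_dombCertificate_sub (a b : ℕ) :
    ((a + b : ℤ) + 2) ^ 3 * dombTerm (a + 1) (b + 1)
      - (2 * (a + b) + 3) * (5 * (a + b) ^ 2 + 15 * (a + b) + 12)
        * (dombTerm (a + 1) b + dombTerm a (b + 1))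
      + 64 * (a + b + 1) ^ 3 * dombTerm a b
      = dombCertificate (a + 1) b - dombCertificate a (b + 1) := by
  have hleft : ((a : ℤ) + 1) ^ 3 * dombTerm (a + 1) b
      = 2 * (2 * a + 1) * (a + b + 1) ^ 2 * dombTerm a b :=
    mod_cast succ_pow_three_mul_dombTerm_succ_left a b
  have hright : ((b : ℤ) + 1) ^ 3 * dombTerm a (b + 1)
      = 2 * (2 * b + 1) * (a + b + 1) ^ 2 * dombTerm a b :=
    mod_cast succ_pow_three_mul_dombTerm_succ_right a b
  have hboth : ((b : ℤ) + 1) ^ 3 * dombTerm (a + 1) (b + 1)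
      = 2 * (2 * b + 1) * (a + 1 + b + 1) ^ 2 * dombTerm (a + 1) b :=
    mod_cast succ_pow_three_mul_dombTerm_succ_right (a + 1) b
  have hne : ((a : ℤ) + 1) ^ 3 * (b + 1) ^ 3 ≠ 0 := by positivity
  apply mul_left_cancel₀ hne
  simp only [dombCertificate]
  push_cast
  linear_combination (a + 1 : ℤ) ^ 3 * (a + b + 2) ^ 3 * hboth
    + (2 * (2 * b + 1) * (a + b + 2) ^ 5
      - (b + 1) ^ 3 * ((2 * (a + b) + 3) * (5 * (a + b) ^ 2 + 15 * (a + b) + 12)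
        + (a + 1 - b) * ((2 * (a + b) + 3) * (3 * (a + b) + 4) + 4 * (a + 1) * b))) * hleft
    - (a + 1 : ℤ) ^ 3 * ((2 * (a + b) + 3) * (5 * (a + b) ^ 2 + 15 * (a + b) + 12)
        - (a - b - 1) * ((2 * (a + b) + 3) * (3 * (a + b) + 4) + 4 * a * (b + 1))) * hright

lemma sum_antidiagonal_sub_telescope {M : Type*} [AddCommGroup M] (f : ℕ → ℕ → M) (n : ℕ) :
    ∑ p ∈ antidiagonal n, (f (p.1 + 1) p.2 - f p.1 (p.2 + 1)) = f (n + 1) 0 - f 0 (n + 1) := by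
  have hleft := Finset.Nat.sum_antidiagonal_succ (n := n) (f := fun p ↦ f p.1 p.2)
  have hright := Finset.Nat.sum_antidiagonal_succ' (n := n) (f := fun p ↦ f p.1 p.2)
  rw [sum_sub_distrib, sub_eq_sub_iff_add_eq_add, add_comm, ← hleft, hright, add_comm]

lemma domb_succ_eq_sum_succ_left (n : ℕ) :
    domb (n + 1) = (n + 1).centralBinom + ∑ p ∈ antidiagonal n, dombTerm (p.1 + 1) p.2 := by
  rw [domb, Finset.Nat.sum_antidiagonal_succ, dombTerm_comm, dombTerm_zero_right]

lemma domb_succ_eq_sum_succ_right (n : ℕ) :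
    domb (n + 1) = (n + 1).centralBinom + ∑ p ∈ antidiagonal n, dombTerm p.1 (p.2 + 1) := by
  rw [domb, Finset.Nat.sum_antidiagonal_succ', dombTerm_zero_right, add_comm]

lemma domb_add_two_eq_sum_succ_succ (n : ℕ) :
    domb (n + 2) =
      2 * (n + 2).centralBinom + ∑ p ∈ antidiagonal n, dombTerm (p.1 + 1) (p.2 + 1) := by
  rw [domb_succ_eq_sum_succ_left, Finset.Nat.sum_antidiagonal_succ', dombTerm_zero_right]
  ring

lemma sum_dombTerm_combination (n : ℕ) :
    ((n : ℤ) + 2) ^ 3 * ∑ p ∈ antidiagonal n, (dombTerm (p.1 + 1) (p.2 + 1) : ℤ)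
      - (2 * n + 3) * (5 * n ^ 2 + 15 * n + 12)
        * (∑ p ∈ antidiagonal n, (dombTerm (p.1 + 1) p.2 : ℤ)
          + ∑ p ∈ antidiagonal n, (dombTerm p.1 (p.2 + 1) : ℤ))
      + 64 * (n + 1) ^ 3 * ∑ p ∈ antidiagonal n, (dombTerm p.1 p.2 : ℤ)
      = 2 * (n + 1) * (2 * n + 3) * (3 * n + 4) * (n + 1).centralBinom := by
  simp only [mul_sum, ← sum_add_distrib, ← sum_sub_distrib]
  calc _ = ∑ p ∈ antidiagonal n,
        (dombCertificate (p.1 + 1) p.2 - dombCertificate p.1 (p.2 + 1)) := by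
        refine sum_congr rfl fun p hp ↦ ?_
        rw [← mem_antidiagonal.1 hp, Nat.cast_add, dombTerm_combination_eq_dombCertificate_sub]
    _ = 2 * dombCertificate (n + 1) 0 := by
        rw [sum_antidiagonal_sub_telescope, dombCertificate_swap (n + 1) 0]
        ring
    _ = 2 * (n + 1) * (2 * n + 3) * (3 * n + 4) * (n + 1).centralBinom := by
        rw [dombCertificate, dombTerm_zero_right]
        push_cast
        ring

theorem dombOperator_domb (n : ℕ) : dombOperator (fun m ↦ (domb m : ℤ)) n = 0 := by
  have hcentral : ((n : ℤ) + 2) * (n + 2).centralBinom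
      = 2 * (2 * n + 3) * (n + 1).centralBinom :=
    mod_cast (n + 1).succ_mul_centralBinom_succ
  have hzero : domb n = ∑ p ∈ antidiagonal n, dombTerm p.1 p.2 := rfl
  have hleft := domb_succ_eq_sum_succ_left n
  have hright := domb_succ_eq_sum_succ_right n
  have hboth := domb_add_two_eq_sum_succ_succ n
  zify at hzero hleft hright hboth
  rw [dombOperator]
  linear_combination sum_dombTerm_combination n + (n + 2 : ℤ) ^ 3 * hboth
    - (2 * n + 3) * (5 * n ^ 2 + 15 * n + 12) * (hleft + hright) + 64 * (n + 1) ^ 3 * hzero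
    + 2 * (n + 2) ^ 2 * hcentral

end DombNumbers

section AlternativeSum

/-- The summand `(2k)! (n + k)! / (k! ^ 5 (n - 2k)!) * 4 ^ (n - 2k)` of the second expression
`altDomb` for the Domb numbers. -/
def altDombTerm (n k : ℕ) : ℕ :=
  k.centralBinom ^ 2 * (3 * k).choose k * (n + k).choose (3 * k) * 4 ^ (n - 2 * k)

/-- The second expression for the Domb numbers, the sum being over `2k ≤ n`. -/
def altDomb (n : ℕ) : ℕ :=
  ∑ k ∈ range (n / 2 + 1), altDombTerm n k

lemma altDombTerm_eq_zero {n k : ℕ} (h : n < 2 * k) : altDombTerm n k = 0 := by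
  rw [altDombTerm, Nat.choose_eq_zero_of_lt (by lia : n + k < 3 * k), mul_zero, zero_mul]

lemma altDomb_eq_sum_range {n N : ℕ} (h : n < 2 * N) :
    altDomb n = ∑ k ∈ range N, altDombTerm n k := by
  refine sum_subset (range_subset_range.2 (by lia)) fun k _ hk ↦ altDombTerm_eq_zero ?_
  rw [mem_range] at hk
  lia

lemma centralBinom_mul_choose_three_mul_factorial_pow_three (k : ℕ) :
    k.centralBinom * (3 * k).choose k * k.factorial ^ 3 = (3 * k).factorial := by
  have htwo : k.centralBinom * k.factorial * k.factorial = (2 * k).factorial := by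
    simpa [two_mul, Nat.centralBinom_eq_two_mul_choose] using
      Nat.add_choose_mul_factorial_mul_factorial k k
  have hthree : (3 * k).choose k * k.factorial * (2 * k).factorial = (3 * k).factorial := by
    have := Nat.choose_mul_factorial_mul_factorial (by lia : k ≤ 3 * k)
    rwa [show 3 * k - k = 2 * k by lia] at this
  rw [← hthree, ← htwo]
  ring

lemma succ_sq_mul_centralBinom_succ_mul_choose_three_mul (k : ℕ) :
    (k + 1) ^ 2 * ((k + 1).centralBinom * (3 * (k + 1)).choose (k + 1))
      = 3 * (3 * k + 1) * (3 * k + 2) * (k.centralBinom * (3 * k).choose k) := by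
  have hk := centralBinom_mul_choose_three_mul_factorial_pow_three k
  have hsucc := centralBinom_mul_choose_three_mul_factorial_pow_three (k + 1)
  rw [Nat.factorial_succ, show 3 * (k + 1) = 3 * k + 1 + 1 + 1 by ring] at hsucc
  simp only [Nat.factorial_succ, ← hk] at hsucc
  have hne : (k + 1) * k.factorial ^ 3 ≠ 0 := by positivity
  apply mul_left_cancel₀ hne
  rw [show 3 * (k + 1) = 3 * k + 1 + 1 + 1 by ring]
  linear_combination hsucc

lemma add_three_mul_choose_eq (n k : ℕ) :
    (n + 1) * (n + 2) * (n + 3) * n.choose k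
      = (n + 3).choose (k + 3) * ((k + 1) * (k + 2) * (k + 3)) := by
  have h₁ := Nat.add_one_mul_choose_eq n k
  have h₂ := Nat.add_one_mul_choose_eq (n + 1) (k + 1)
  have h₃ := Nat.add_one_mul_choose_eq (n + 2) (k + 2)
  linear_combination (k + 1) * (k + 2) * h₃ + (k + 1) * (n + 3) * h₂ + (n + 2) * (n + 3) * h₁

lemma succ_pow_four_mul_altDombTerm_add_two_succ (n k : ℕ) :
    (k + 1) ^ 4 * altDombTerm (n + 2) (k + 1)
      = 2 * (2 * k + 1) * (n + k + 1) * (n + k + 2) * (n + k + 3) * altDombTerm n k := by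
  have hcentral := k.succ_mul_centralBinom_succ
  have htrinomial := succ_sq_mul_centralBinom_succ_mul_choose_three_mul k
  have hchoose := add_three_mul_choose_eq (n + k) (3 * k)
  calc (k + 1) ^ 4 * altDombTerm (n + 2) (k + 1)
      = ((k + 1) * (k + 1).centralBinom)
          * ((k + 1) ^ 2 * ((k + 1).centralBinom * (3 * (k + 1)).choose (k + 1)))
          * (k + 1) * (n + k + 3).choose (3 * k + 3) * 4 ^ (n - 2 * k) := by
        rw [altDombTerm, show n + 2 + (k + 1) = n + k + 3 by ring,
          show n + 2 - 2 * (k + 1) = n - 2 * k by lia, show 3 * (k + 1) = 3 * k + 3 by ring]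
        ring
    _ = 2 * (2 * k + 1) * k.centralBinom * (k.centralBinom * (3 * k).choose k)
          * ((n + k + 3).choose (3 * k + 3) * ((3 * k + 1) * (3 * k + 2) * (3 * k + 3)))
          * 4 ^ (n - 2 * k) := by
        rw [hcentral, htrinomial]; ring
    _ = 2 * (2 * k + 1) * (n + k + 1) * (n + k + 2) * (n + k + 3) * altDombTerm n k := by
        rw [← hchoose, altDombTerm]; ring

lemma add_one_sub_mul_choose_succ (n k : ℕ) :
    ((n : ℤ) + 1 - k) * (n + 1).choose k = (n + 1) * n.choose k := by
  rcases le_or_gt k (n + 1) with hle | hlt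
  · have h := congrArg (Nat.cast (R := ℤ)) (Nat.choose_mul_succ_eq n k)
    push_cast [hle] at h
    linear_combination -h
  · simp [Nat.choose_eq_zero_of_lt hlt, Nat.choose_eq_zero_of_lt (Nat.lt_of_succ_lt hlt)]

lemma sub_mul_altDombTerm_succ_left (n k : ℕ) :
    ((n : ℤ) + 1 - 2 * k) * altDombTerm (n + 1) k = 4 * (n + k + 1) * altDombTerm n k := by
  have hchoose := add_one_sub_mul_choose_succ (n + k) (3 * k)
  have hpow : ((n + k).choose (3 * k) : ℤ) * 4 ^ (n + 1 - 2 * k)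
      = (n + k).choose (3 * k) * (4 * 4 ^ (n - 2 * k)) := by
    rcases lt_or_ge n (2 * k) with hlt | hle
    · simp [Nat.choose_eq_zero_of_lt (by lia : n + k < 3 * k)]
    · rw [Nat.sub_add_comm hle, pow_succ']
  rw [altDombTerm, altDombTerm, add_right_comm n 1 k]
  push_cast at hchoose ⊢
  linear_combination
    (k.centralBinom : ℤ) ^ 2 * (3 * k).choose k * 4 ^ (n + 1 - 2 * k) * hchoose
    + (k.centralBinom : ℤ) ^ 2 * (3 * k).choose k * (n + k + 1) * hpow

lemma succ_pow_four_mul_altDombTerm_succ_succ (n k : ℕ) :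
    2 * ((k : ℤ) + 1) ^ 4 * altDombTerm (n + 1) (k + 1)
      = (2 * k + 1) * (n + k + 1) * (n + k + 2) * (n - 2 * k) * altDombTerm n k := by
  have hdiag : ((k : ℤ) + 1) ^ 4 * altDombTerm (n + 2) (k + 1)
      = 2 * (2 * k + 1) * (n + k + 1) * (n + k + 2) * (n + k + 3) * altDombTerm n k :=
    mod_cast succ_pow_four_mul_altDombTerm_add_two_succ n k
  have hleft := sub_mul_altDombTerm_succ_left (n + 1) (k + 1)
  have hne : 2 * ((n : ℤ) + k + 3) ≠ 0 := by positivity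
  apply mul_left_cancel₀ hne
  push_cast at hleft
  linear_combination (n - 2 * k : ℤ) * hdiag - (k + 1 : ℤ) ^ 4 * hleft

lemma succ_pow_four_mul_altDombTerm_succ_right (n k : ℕ) :
    8 * ((k : ℤ) + 1) ^ 4 * altDombTerm n (k + 1)
      = (2 * k + 1) * (n + k + 1) * (n - 2 * k) * (n - 2 * k - 1) * altDombTerm n k := by
  have hdiag := succ_pow_four_mul_altDombTerm_succ_succ n k
  have hleft := sub_mul_altDombTerm_succ_left n (k + 1)
  have hne : (n : ℤ) + k + 2 ≠ 0 := by positivity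
  apply mul_left_cancel₀ hne
  push_cast at hleft
  linear_combination (n - 2 * k - 1 : ℤ) * hdiag - 2 * (k + 1 : ℤ) ^ 4 * hleft

/-- The telescoping certificate of the recurrence for `altDomb`, from Zeilberger's algorithm. -/
def altDombCertificate (n k : ℕ) : ℤ :=
  -24 * (3 * n + 4) * (2 * k + 1) * (n + k + 1) * altDombTerm n k

lemma dombOperator_altDombTerm_zero (n : ℕ) :
    dombOperator (fun m ↦ (altDombTerm m 0 : ℤ)) n = altDombCertificate n 0 := by
  have hterm (m : ℕ) : altDombTerm m 0 = 4 ^ m := by simp [altDombTerm]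
  simp only [dombOperator, altDombCertificate, hterm]
  push_cast
  ring

lemma dombOperator_altDombTerm_succ (n k : ℕ) :
    dombOperator (fun m ↦ (altDombTerm m (k + 1) : ℤ)) n
      = altDombCertificate n (k + 1) - altDombCertificate n k := by
  have hadd_two : ((k : ℤ) + 1) ^ 4 * altDombTerm (n + 2) (k + 1)
      = 2 * (2 * k + 1) * (n + k + 1) * (n + k + 2) * (n + k + 3) * altDombTerm n k :=
    mod_cast succ_pow_four_mul_altDombTerm_add_two_succ n k
  have hadd_one := succ_pow_four_mul_altDombTerm_succ_succ n k
  have hadd_zero := succ_pow_four_mul_altDombTerm_succ_right n k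
  have hne : 8 * ((k : ℤ) + 1) ^ 4 ≠ 0 := by positivity
  apply mul_left_cancel₀ hne
  simp only [dombOperator, altDombCertificate]
  push_cast
  linear_combination 8 * (n + 2 : ℤ) ^ 3 * hadd_two
    - 8 * (2 * n + 3 : ℤ) * (5 * n ^ 2 + 15 * n + 12) * hadd_one
    + (64 * (n + 1 : ℤ) ^ 3 + 24 * (3 * n + 4) * (2 * k + 3) * (n + k + 2)) * hadd_zero

lemma sum_range_succ_dombOperator_altDombTerm (n N : ℕ) :
    ∑ k ∈ range (N + 1), dombOperator (fun m ↦ (altDombTerm m k : ℤ)) n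
      = altDombCertificate n N := by
  induction N with
  | zero => rw [zero_add, sum_range_one, dombOperator_altDombTerm_zero]
  | succ N ih => rw [sum_range_succ, ih, dombOperator_altDombTerm_succ, add_sub_cancel]

theorem dombOperator_altDomb (n : ℕ) : dombOperator (fun m ↦ (altDomb m : ℤ)) n = 0 := by
  have hsum (m : ℕ) (hm : m ≤ n + 2) :
      (altDomb m : ℤ) = ∑ k ∈ range (n + 2), (altDombTerm m k : ℤ) := by
    rw [altDomb_eq_sum_range (by lia : m < 2 * (n + 2)), Nat.cast_sum]
  calc dombOperator (fun m ↦ (altDomb m : ℤ)) n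
      = dombOperator (fun m ↦ ∑ k ∈ range (n + 2), (altDombTerm m k : ℤ)) n := by
        simp only [dombOperator, hsum n (by lia), hsum (n + 1) (by lia), hsum (n + 2) le_rfl]
    _ = altDombCertificate n (n + 1) := by
        rw [dombOperator_sum, sum_range_succ_dombOperator_altDombTerm]
    _ = 0 := by
        rw [altDombCertificate, altDombTerm_eq_zero (by lia), Nat.cast_zero, mul_zero]

end AlternativeSum

theorem altDomb_eq_domb (n : ℕ) : altDomb n = domb n := by
  have hrec (n : ℕ) : dombOperator (fun m ↦ (altDomb m : ℤ)) n
      = dombOperator (fun m ↦ (domb m : ℤ)) n := by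
    rw [dombOperator_altDomb, dombOperator_domb]
  exact_mod_cast eq_of_dombOperator_eq hrec (by decide) (by decide) n

lemma domb_eq_sum_range (n : ℕ) :
    domb n = ∑ k ∈ range (n + 1),
      (2 * k).choose k * (2 * n - 2 * k).choose (n - k) * n.choose k ^ 2 := by
  rw [domb, Finset.Nat.sum_antidiagonal_eq_sum_range_succ dombTerm]
  refine sum_congr rfl fun k hk ↦ ?_
  rw [dombTerm, Nat.add_sub_of_le (mem_range_succ_iff.1 hk), ← Nat.mul_sub,
    Nat.centralBinom_eq_two_mul_choose, Nat.centralBinom_eq_two_mul_choose]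

theorem stmt_3 (n : ℕ) :
    ∑ k ∈ Finset.range (n / 2 + 1),
        Nat.choose (2 * k) k ^ 2 * Nat.choose (3 * k) k * Nat.choose (n + k) (3 * k) *
          4 ^ (n - 2 * k)
      = ∑ k ∈ Finset.range (n + 1),
          Nat.choose (2 * k) k * Nat.choose (2 * n - 2 * k) (n - k) * Nat.choose n k ^ 2 := by
  rw [← domb_eq_sum_range]
  exact altDomb_eq_domb n
end

section
/- Let p be an odd prime and let u be an integer with 4u ≢ 1 (mod p). Then Σ_{n=0}^{p-1} A_n · u^n ≡ Σ_{k=0}^{p-1} C(2k,k)^2 · C(3k,k) · (u^2/(1-4u)^3)^k (mod p). -/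
open Finset

/-- `A n = ∑_{k=0}^{n} C(2k,k)·C(2n-2k,n-k)·C(n,k)^2`. -/
def A (n : ℕ) : ℕ :=
  ∑ k ∈ Finset.range (n + 1),
    Nat.choose (2 * k) k * Nat.choose (2 * n - 2 * k) (n - k) * Nat.choose n k ^ 2

/-!
Expanding `C(i+j,i)^2 = ∑ k, C(i,k) C(j,k) C(i+j+k,i+j)` in the definition of `A n` decouples `i`
from `j = n - i`, and what is left is a convolution of two copies of the sequence `C(2i,i) C(i,k)`.
Its generating function is `C(2k,k) z^k (1-4z)^(-k-1/2)`, whose square has an integral exponent, so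
`A n = ∑ k, C(2k,k)^2 C(3k,k) C(n+k,3k) 4^(n-2k)`.  In characteristic `p` the truncation at `p` of
the series of `(1-y)^(-d-1)` is the polynomial `(1-y)^(p-1-d)`; summing over `n < p` first, with
`y = 4u` and `d = 3k`, gives `u^(2k) (1-4u)^(p-1-3k)`, and Fermat's little theorem finishes.
-/

theorem sum_range_choose_mul_choose_sub (m n k : ℕ) :
    ∑ i ∈ range (k + 1), m.choose i * n.choose (k - i) = (m + n).choose k := by
  rw [Nat.add_choose_eq, Nat.sum_antidiagonal_eq_sum_range_succ_mk]

theorem sum_range_choose_mul_choose_mul_choose (m : ℕ) {n s : ℕ} (hs : s ≤ n) :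
    ∑ k ∈ range (n + 1), m.choose k * n.choose k * k.choose s =
      m.choose s * (m + n - s).choose m := by
  obtain hms | hsm := lt_or_ge m s
  · rw [Nat.choose_eq_zero_of_lt hms, zero_mul]
    refine sum_eq_zero fun k _ ↦ ?_
    obtain hk | hk := lt_or_ge m k
    · simp [Nat.choose_eq_zero_of_lt hk]
    · simp [Nat.choose_eq_zero_of_lt (hk.trans_lt hms)]
  obtain ⟨t, rfl⟩ := Nat.exists_eq_add_of_le hs
  have hlow : ∑ k ∈ range s, m.choose k * (s + t).choose k * k.choose s = 0 :=
    sum_eq_zero fun k hk ↦ by rw [Nat.choose_eq_zero_of_lt (mem_range.mp hk), mul_zero]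
  rw [add_assoc, sum_range_add, hlow, zero_add]
  calc ∑ l ∈ range (t + 1), m.choose (s + l) * (s + t).choose (s + l) * (s + l).choose s
      = ∑ l ∈ range (t + 1), m.choose s * ((m - s).choose l * (s + t).choose (t - l)) := by
        refine sum_congr rfl fun l hl ↦ ?_
        have hl : l ≤ t := Nat.lt_succ_iff.mp (mem_range.mp hl)
        rw [mul_right_comm, Nat.choose_mul (Nat.le_add_right s l), Nat.add_sub_cancel_left,
          mul_assoc, ← Nat.choose_symm (show s + l ≤ s + t by lia), Nat.add_sub_add_left]
    _ = m.choose s * (m + (s + t) - s).choose m := by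
        rw [← mul_sum, sum_range_choose_mul_choose_sub,
          show m + (s + t) - s = m + t by lia, show m - s + (s + t) = m + t by lia,
          ← Nat.choose_symm_add]

theorem choose_mul_choose_eq_sum (x m : ℕ) {n N : ℕ} (hN : n < N) :
    x.choose m * x.choose n =
      ∑ k ∈ range N, m.choose k * n.choose k * (x + k).choose (m + n) := by
  have vandermonde : ∀ k ∈ range (n + 1), (x + k).choose (m + n) =
      ∑ s ∈ range (n + 1), k.choose s * x.choose (m + n - s) := by
    intro k hk
    rw [add_comm, ← sum_range_choose_mul_choose_sub]
    refine eventually_constant_sum (fun s hs ↦ ?_) (by lia)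
    rw [Nat.choose_eq_zero_of_lt (by have := mem_range.mp hk; lia), zero_mul]
  symm
  calc ∑ k ∈ range N, m.choose k * n.choose k * (x + k).choose (m + n)
      = ∑ k ∈ range (n + 1), m.choose k * n.choose k * (x + k).choose (m + n) :=
        eventually_constant_sum (fun k hk ↦ by simp [Nat.choose_eq_zero_of_lt hk]) hN
    _ = ∑ s ∈ range (n + 1), (∑ k ∈ range (n + 1), m.choose k * n.choose k * k.choose s) *
          x.choose (m + n - s) := by
        simp_rw [sum_mul]
        rw [sum_comm]
        refine sum_congr rfl fun k hk ↦ ?_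
        rw [vandermonde k hk, mul_sum]
        exact sum_congr rfl fun s _ ↦ by ring
    _ = ∑ s ∈ range (n + 1), x.choose m * (m.choose s * (x - m).choose (n - s)) := by
        refine sum_congr rfl fun s hs ↦ ?_
        have hs : s ≤ n := Nat.lt_succ_iff.mp (mem_range.mp hs)
        have trinomial := Nat.choose_mul (n := x) (show m ≤ m + n - s by lia)
        rw [show m + n - s - m = n - s by lia] at trinomial
        rw [sum_range_choose_mul_choose_mul_choose m hs]
        linear_combination m.choose s * trinomial
    _ = x.choose m * x.choose n := by
        obtain hxm | hmx := lt_or_ge x m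
        · simp [Nat.choose_eq_zero_of_lt hxm]
        · rw [← mul_sum, sum_range_choose_mul_choose_sub, Nat.add_sub_cancel' hmx]

section CentralBinomialConvolution

open PowerSeries

theorem succ_mul_centralBinom_mul_choose_succ (k l : ℕ) :
    (l + 1) * ((k + (l + 1)).centralBinom * (k + (l + 1)).choose k) =
      2 * (2 * (k + l) + 1) * ((k + l).centralBinom * (k + l).choose k) := by
  have hcentral := Nat.succ_mul_centralBinom_succ (k + l)
  have hchoose := Nat.choose_mul_succ_eq (k + l) k
  rw [show k + l + 1 - k = l + 1 by lia] at hchoose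
  rw [← add_assoc]
  linear_combination (k + l).choose k * hcentral - (k + l + 1).centralBinom * hchoose

theorem succ_mul_ringChoose_succ {R : Type*} [CommRing R] [BinomialRing R] (r : R) (l : ℕ) :
    (l + 1) * Ring.choose r (l + 1) = (r - l) * Ring.choose r l := by
  simpa [mul_comm] using Ring.choose_smul_choose r (Nat.le_succ l)

theorem centralBinom_mul_choose_eq_ringChoose (k l : ℕ) :
    ((k + l).centralBinom * (k + l).choose k : ℚ) =
      k.centralBinom * ((-4) ^ l * Ring.choose (-(k + 1 / 2) : ℚ) l) := by
  induction l with
  | zero => simp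
  | succ l ih =>
    have hleft := congrArg (Nat.cast (R := ℚ)) (succ_mul_centralBinom_mul_choose_succ k l)
    have hright := succ_mul_ringChoose_succ (-(k + 1 / 2) : ℚ) l
    push_cast at hleft
    refine mul_left_cancel₀ (Nat.cast_add_one_ne_zero (R := ℚ) l) ?_
    rw [hleft, ih]
    linear_combination 4 * (k.centralBinom * (-4) ^ l) * hright

theorem mk_centralBinom_mul_choose (k : ℕ) :
    (mk fun i ↦ (i.centralBinom * i.choose k : ℚ)) =
      C (k.centralBinom : ℚ) * (X ^ k * rescale (-4) (binomialSeries ℚ (-(k + 1 / 2) : ℚ))) := by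
  ext i
  rw [coeff_mk, coeff_C_mul, coeff_X_pow_mul']
  split_ifs with hki
  · obtain ⟨l, rfl⟩ := Nat.exists_eq_add_of_le hki
    rw [centralBinom_mul_choose_eq_ringChoose, Nat.add_sub_cancel_left, coeff_rescale,
      binomialSeries_coeff, smul_eq_mul, mul_one]
  · rw [Nat.choose_eq_zero_of_lt (not_le.mp hki), Nat.cast_zero, mul_zero, mul_zero]

theorem coeff_rescale_binomialSeries_neg_succ {R : Type*} [CommRing R] [BinomialRing R] (c : R)
    (d m : ℕ) :
    coeff m (rescale (-c) (binomialSeries R (-(d + 1) : R))) = c ^ m * (d + m).choose d := by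
  have hshift : (d + 1 + m - 1 : R) = (d + m : ℕ) := by push_cast; ring
  have hchoose : Ring.choose (-(d + 1) : R) m = (-1) ^ m * (d + m).choose d := by
    rw [Ring.choose_neg, hshift, Ring.choose_natCast, Nat.choose_symm_add, Units.smul_def,
      zsmul_eq_mul, Int.cast_negOnePow_natCast]
  rw [coeff_rescale, binomialSeries_coeff, hchoose, smul_eq_mul, mul_one, ← mul_assoc, ← mul_pow,
    neg_mul_neg, mul_one]

theorem sum_antidiagonal_centralBinom_mul_choose (k l n : ℕ) :
    ∑ ij ∈ antidiagonal n, (ij.1.centralBinom * ij.1.choose k) *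
        (ij.2.centralBinom * ij.2.choose l) =
      k.centralBinom * l.centralBinom * (4 ^ (n - (k + l)) * n.choose (k + l)) := by
  have hprod : (mk fun i ↦ (i.centralBinom * i.choose k : ℚ)) *
      (mk fun i ↦ (i.centralBinom * i.choose l : ℚ)) =
        C (k.centralBinom * l.centralBinom : ℚ) *
          (X ^ (k + l) * rescale (-4) (binomialSeries ℚ (-((k + l : ℕ) + 1) : ℚ))) := by
    have hexp : (-((k + l : ℕ) + 1) : ℚ) = -(k + 1 / 2) + -(l + 1 / 2) := by push_cast; ring
    rw [mk_centralBinom_mul_choose, mk_centralBinom_mul_choose, hexp, binomialSeries_add, map_mul,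
      map_mul, pow_add]
    ring
  have hcoeff := congrArg (coeff n) hprod
  rw [coeff_mul, coeff_C_mul, coeff_X_pow_mul'] at hcoeff
  simp only [coeff_mk] at hcoeff
  split_ifs at hcoeff with hn
  · rw [coeff_rescale_binomialSeries_neg_succ, Nat.add_sub_cancel' hn] at hcoeff
    exact_mod_cast hcoeff
  · rw [Nat.choose_eq_zero_of_lt (not_le.mp hn)]
    exact_mod_cast hcoeff

end CentralBinomialConvolution

theorem A_eq_sum_antidiagonal (n : ℕ) :
    A n = ∑ ij ∈ antidiagonal n,
      ij.1.centralBinom * ij.2.centralBinom * (n.choose ij.1 * n.choose ij.2) := by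
  rw [A, Nat.sum_antidiagonal_eq_sum_range_succ
    (fun i j ↦ i.centralBinom * j.centralBinom * (n.choose i * n.choose j))]
  refine sum_congr rfl fun k hk ↦ ?_
  rw [Nat.choose_symm (Nat.lt_succ_iff.mp (mem_range.mp hk)), ← Nat.mul_sub, sq]
  rfl

theorem A_eq_sum_choose_three_mul {n N : ℕ} (hN : n < N) :
    A n = ∑ k ∈ range N, (2 * k).choose k ^ 2 * (3 * k).choose k *
      ((n + k).choose (3 * k) * 4 ^ (n - 2 * k)) := by
  have hterm : ∀ ij ∈ antidiagonal n, n.choose ij.1 * n.choose ij.2 =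
      ∑ k ∈ range N, ij.1.choose k * ij.2.choose k * (n + k).choose n := by
    intro ij hij
    rw [HasAntidiagonal.mem_antidiagonal] at hij
    rw [choose_mul_choose_eq_sum n ij.1 (show ij.2 < N by lia), hij]
  calc A n = ∑ k ∈ range N, (n + k).choose n * ∑ ij ∈ antidiagonal n,
        (ij.1.centralBinom * ij.1.choose k) * (ij.2.centralBinom * ij.2.choose k) := by
        simp_rw [mul_sum]
        rw [A_eq_sum_antidiagonal, sum_comm]
        refine sum_congr rfl fun ij hij ↦ ?_
        rw [hterm ij hij, mul_sum]
        exact sum_congr rfl fun k _ ↦ by ring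
    _ = ∑ k ∈ range N, (2 * k).choose k ^ 2 * (3 * k).choose k *
          ((n + k).choose (3 * k) * 4 ^ (n - 2 * k)) := by
        refine sum_congr rfl fun k _ ↦ ?_
        have trinomial := Nat.choose_mul (n := n + k) (show k ≤ 3 * k by lia)
        rw [Nat.add_sub_cancel, show 3 * k - k = 2 * k by lia] at trinomial
        rw [sum_antidiagonal_centralBinom_mul_choose, ← two_mul, Nat.choose_symm_add,
          Nat.centralBinom_eq_two_mul_choose]
        linear_combination (2 * k).choose k ^ 2 * 4 ^ (n - 2 * k) * trinomial.symm

theorem sum_range_A_mul_pow {R : Type*} [CommSemiring R] (N : ℕ) (x : R) :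
    ∑ n ∈ range N, (A n : R) * x ^ n =
      ∑ k ∈ range N, ((2 * k).choose k : R) ^ 2 * ((3 * k).choose k : R) *
        ∑ n ∈ range N, ((n + k).choose (2 * k + k) : R) * 4 ^ (n - 2 * k) * x ^ n := by
  simp_rw [mul_sum]
  rw [sum_comm]
  refine sum_congr rfl fun n hn ↦ ?_
  rw [A_eq_sum_choose_three_mul (mem_range.mp hn), Nat.cast_sum, sum_mul]
  refine sum_congr rfl fun k _ ↦ ?_
  rw [show 2 * k + k = 3 * k by ring]
  push_cast
  ring

section TruncatedSeries

variable {R : Type*} [CommRing R]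

theorem one_sub_mul_sum_range_choose_succ_mul_pow (d N : ℕ) (y : R) :
    (1 - y) * ∑ n ∈ range N, ((n + (d + 1)).choose (d + 1) : R) * y ^ n =
      ∑ n ∈ range N, ((n + d).choose d : R) * y ^ n - (N + d).choose (d + 1) * y ^ N := by
  induction N with
  | zero => simp
  | succ N ih =>
    have pascal : ((N + (d + 1)).choose (d + 1) : R) =
        (N + d).choose d + (N + d).choose (d + 1) := by
      rw [← add_assoc, Nat.choose_succ_succ', Nat.cast_add]
    rw [sum_range_succ, sum_range_succ, mul_add, ih, show N + 1 + d = N + (d + 1) by ring, pascal]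
    ring

variable (p : ℕ) [Fact p.Prime] [CharP R p]

theorem natCast_choose_add_eq_zero_of_charP {a b : ℕ} (ha : a < p) (hb : b < p)
    (hab : p ≤ b + a) : ((b + a).choose a : R) = 0 := by
  rw [CharP.cast_eq_zero_iff R p, add_comm]
  exact (Fact.out : p.Prime).dvd_choose_add ha hb (by lia)

theorem sum_range_choose_mul_pow_of_charP {d e : ℕ} (hde : d + e + 1 = p) (y : R) :
    ∑ n ∈ range p, ((n + d).choose d : R) * y ^ n = (1 - y) ^ e := by
  induction e generalizing d with
  | zero =>
    rw [sum_eq_single_of_mem 0 (mem_range.mpr (by lia))]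
    · simp
    · intro n hn hn0
      rw [natCast_choose_add_eq_zero_of_charP p (by lia) (mem_range.mp hn) (by lia), zero_mul]
  | succ e ih =>
    have hboundary : ((p + d).choose (d + 1) : R) = 0 := by
      have := natCast_choose_add_eq_zero_of_charP (R := R) p (a := d + 1) (b := p - 1)
        (by lia) (by lia) (by lia)
      rwa [show p - 1 + (d + 1) = p + d by lia] at this
    rw [pow_succ', ← ih (d := d + 1) (by lia), one_sub_mul_sum_range_choose_succ_mul_pow,
      hboundary, zero_mul, sub_zero]

theorem sum_range_choose_mul_pow_sub_mul_pow_of_charP {a b : ℕ} (hab : a + b < p) (c x : R) :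
    ∑ n ∈ range p, ((n + b).choose (a + b) : R) * c ^ (n - a) * x ^ n =
      x ^ a * (1 - c * x) ^ (p - 1 - (a + b)) := by
  have hlow : ∑ n ∈ range a, ((n + b).choose (a + b) : R) * c ^ (n - a) * x ^ n = 0 :=
    sum_eq_zero fun n hn ↦ by
      rw [Nat.choose_eq_zero_of_lt (by have := mem_range.mp hn; lia)]; simp
  have htail : ∑ m ∈ range p, ((m + (a + b)).choose (a + b) : R) * (c * x) ^ m =
      ∑ m ∈ range (p - a), ((m + (a + b)).choose (a + b) : R) * (c * x) ^ m := by
    refine (sum_subset (range_mono (Nat.sub_le p a)) fun m hm hm' ↦ ?_).symm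
    rw [mem_range] at hm hm'
    rw [natCast_choose_add_eq_zero_of_charP p hab hm (by lia), zero_mul]
  rw [← sum_range_choose_mul_pow_of_charP p (d := a + b) (by lia), htail, mul_sum,
    ← sum_range_add_sum_Ico _ (show a ≤ p by lia), hlow, zero_add, sum_Ico_eq_sum_range]
  refine sum_congr rfl fun m _ ↦ ?_
  rw [Nat.add_sub_cancel_left, add_right_comm, add_comm _ m, pow_add, mul_pow]
  ring

end TruncatedSeries

theorem prime_dvd_choose_two_mul_sq_mul_choose_three_mul {p k : ℕ} (hp : p.Prime) (hk : k < p)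
    (hpk : p ≤ 3 * k) : p ∣ (2 * k).choose k ^ 2 * (3 * k).choose k := by
  obtain h | h := lt_or_ge (2 * k) p
  · exact (hp.dvd_choose hk (by lia) hpk).mul_left _
  · exact ((hp.dvd_choose hk (by lia) h).pow two_ne_zero).mul_right _

theorem stmt_4_general {K : Type*} [Field K] (p : ℕ) [Fact p.Prime] [CharP K p] (x : K)
    (hx : 1 - 4 * x ≠ 0) :
    ∑ n ∈ range p, (A n : K) * x ^ n = (1 - 4 * x) ^ (p - 1) *
      ∑ k ∈ range p, ((2 * k).choose k : K) ^ 2 * ((3 * k).choose k : K) *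
        (x ^ 2 / (1 - 4 * x) ^ 3) ^ k := by
  rw [sum_range_A_mul_pow, mul_sum]
  refine sum_congr rfl fun k hk ↦ ?_
  obtain h3k | h3k := lt_or_ge (2 * k + k) p
  · have hpow : (1 - 4 * x) ^ (p - 1) =
        (1 - 4 * x) ^ (p - 1 - (2 * k + k)) * ((1 - 4 * x) ^ 3) ^ k := by
      rw [← pow_mul, ← pow_add]
      congr 1
      lia
    have hcancel : (x ^ 2 / (1 - 4 * x) ^ 3) ^ k * ((1 - 4 * x) ^ 3) ^ k = x ^ (2 * k) := by
      rw [← mul_pow, div_mul_cancel₀ _ (pow_ne_zero 3 hx), pow_mul]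
    rw [sum_range_choose_mul_pow_sub_mul_pow_of_charP p h3k, hpow, ← hcancel]
    ring
  · have hzero : ((2 * k).choose k : K) ^ 2 * (3 * k).choose k = 0 :=
      mod_cast (CharP.cast_eq_zero_iff K p _).mpr <|
        prime_dvd_choose_two_mul_sq_mul_choose_three_mul Fact.out (mem_range.mp hk) (by lia)
    rw [hzero, zero_mul, zero_mul, mul_zero]

theorem stmt_4 (p : ℕ) [Fact p.Prime] (hodd : Odd p) (u : ℤ)
    (hu : ¬ (4 * u ≡ 1 [ZMOD (p : ℤ)])) :
    (∑ n ∈ Finset.range p, (A n : ZMod p) * (u : ZMod p) ^ n)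
      = ∑ k ∈ Finset.range p,
          (Nat.choose (2 * k) k : ZMod p) ^ 2 * (Nat.choose (3 * k) k : ZMod p) *
            ((u : ZMod p) ^ 2 / (1 - 4 * (u : ZMod p)) ^ 3) ^ k := by
  have hx : (1 - 4 * (u : ZMod p)) ≠ 0 := fun h ↦
    hu <| (ZMod.intCast_eq_intCast_iff _ _ p).mp <| by push_cast; exact (sub_eq_zero.mp h).symm
  rw [stmt_4_general p _ hx, ZMod.pow_card_sub_one_eq_one hx, one_mul]
end
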